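/- Let p be a prime, A a set, and let f: ℙ(ℚ³) → A be a map such that: (1) f takes exactly three values; (2) f takes at most two values on every projective line of ℙ(ℚ³); (3) for every projective line ℓ ⊂ ℙ(ℚ³), the restriction f|_ℓ is induced via some ℤ_(p)-lattice B′ in the underlying 2-dimensional ℚ-subspace from a flag map on the projective line ℙ(B′/pB′). Then there are exactly three equivalence classes of ℤ_(p)-lattices B ⊂ ℚ³ such that f is induced via B from a flag map f̄: ℙ(B/pB) → A. -/

import Mathlib

/- Common set-up for statements about projective spaces `ℙ(V)`: flag maps,
   `ℤ_(p)`-lattices and the associated reduction maps to `ℙ(B/pB)`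
   (two nonzero vectors are identified by `ρ_B` iff suitable nonzero scalar
   multiples of them lie in `B ∖ pB` and are congruent modulo `pB`). -/

universe u v w

section PreludeB

variable {k : Type u} [Field k] {V : Type v} [AddCommGroup V] [Module k V] {A : Type w}

/-- The projective subspace `ℙ(W) ⊆ ℙ(V)` attached to a submodule `W ⊆ V`. -/
def psub (W : Submodule k V) : Set (Projectivization k V) :=
  {x | ∃ v : V, ∃ h : v ≠ 0, Projectivization.mk k v h = x ∧ v ∈ W}

/-- The projective line of `ℙ(V)` through the classes of two (independent)
vectors `v`, `w`. -/
def lineP (v w : V) : Set (Projectivization k V) :=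
  {x | ∃ a b : k, ∃ h : a • v + b • w ≠ 0, Projectivization.mk k (a • v + b • w) h = x}

/-- `f` is a flag map on the finite-dimensional projective subspace `ℙ(W)`:
there is a chain (flag) of subspaces of `W` such that `f` is constant on each
successive difference. -/
def ChainFlagOn (f : Projectivization k V → A) (W : Submodule k V) : Prop :=
  ∃ c : ℕ → Submodule k V, c 0 = ⊥ ∧ (∃ n, c n = W) ∧ (∀ i, c i ≤ c (i + 1)) ∧
    (∀ i, c i ≤ W) ∧
    ∀ i, ∀ x ∈ psub (c (i + 1)) \ psub (c i), ∀ y ∈ psub (c (i + 1)) \ psub (c i), f x = f y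

/-- A flag map on a projective space over `F_p` (possibly infinite-dimensional):
the restriction to every finite-dimensional projective subspace is a flag map. -/
def FpFlagMap (f : Projectivization k V → A) : Prop :=
  ∀ W : Submodule k V, FiniteDimensional k W → ChainFlagOn f W

end PreludeB

section PreludeBQ

variable {V : Type v} [AddCommGroup V] [Module ℚ V] {A : Type w}

/-- The `ℤ_(p)`-span of a finite set of vectors (coefficients are rationals
with denominator coprime to `p`). -/
def zpSpanV (p : ℕ) (s : Finset V) : Set V :=
  {z | ∃ f : V → ℚ, (∀ t, ¬ (p ∣ (f t).den)) ∧ z = ∑ t ∈ s, f t • t}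

/-- `p·B`. -/
def pSMul (p : ℕ) (B : Set V) : Set V := {z | ∃ b ∈ B, z = (p : ℚ) • b}

/-- `B` is a `ℤ_(p)`-lattice in the `ℚ`-subspace `W`: a finitely generated
`ℤ_(p)`-submodule spanning `W` over `ℚ`. -/
def IsZpLatIn (p : ℕ) (W : Submodule ℚ V) (B : Set V) : Prop :=
  (∃ s : Finset V, B = zpSpanV p s) ∧ Submodule.span ℚ B = W

/-- Two nonzero vectors have the same image under the reduction map
`ρ_B : ℙ(V) → ℙ(B/pB)`. -/
def ZpRelV (p : ℕ) (B : Set V) (x y : V) : Prop :=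
  ∃ x' y' : V, (∃ a : ℚ, a ≠ 0 ∧ x' = a • x) ∧ (∃ b : ℚ, b ≠ 0 ∧ y' = b • y) ∧
    x' ∈ B ∧ x' ∉ pSMul p B ∧ y' ∈ B ∧ y' ∉ pSMul p B ∧ x' - y' ∈ pSMul p B

/-- Equivalence of lattices: `B' = a·B` for some `a ∈ ℚ^×`. -/
def LatEq (B B' : Set V) : Prop := ∃ a : ℚ, a ≠ 0 ∧ B' = (fun t => a • t) '' B

/-- `f`, restricted to `ℙ(W)`, is induced via the lattice `B` (i.e. it factors
through the reduction map `ρ_B`); such lattices are called `f`-compatible. -/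
def InducedOn (f : Projectivization ℚ V → A) (W : Submodule ℚ V) (p : ℕ) (B : Set V) : Prop :=
  ∀ x y : V, ∀ (hx : x ≠ 0) (hy : y ≠ 0), x ∈ W → y ∈ W → ZpRelV p B x y →
    f (Projectivization.mk ℚ x hx) = f (Projectivization.mk ℚ y hy)

/-- Preimage in `V` of the line of `ℙ(B/pB)` through the residue classes of
`q` and `w`. -/
def resLineV (p : ℕ) (B : Set V) (q w : V) : Set V :=
  {z | ∃ a b : ℚ, ¬ (p ∣ a.den) ∧ ¬ (p ∣ b.den) ∧ ∃ y ∈ pSMul p B, z = a • q + b • w + y}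

/-- `f` is induced via `B` from a flag map on the residue projective *line*
`ℙ(B/pB)`, i.e. from a map constant off one point (the class of `q`). -/
def ResFlagLine (f : Projectivization ℚ V → A) (p : ℕ) (B : Set V) : Prop :=
  ∃ q : V, q ∈ B \ pSMul p B ∧
    ∀ x y : V, ∀ (hx : x ≠ 0) (hy : y ≠ 0), ¬ ZpRelV p B x q → ¬ ZpRelV p B y q →
      f (Projectivization.mk ℚ x hx) = f (Projectivization.mk ℚ y hy)

/-- `f` is induced via `B` from a flag map on the residue projective *plane*
`ℙ(B/pB)`: for a flag (point `q̄`) ∈ (line `l̄` through `q̄` and `w̄`), the map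
is constant off `l̄` and constant on `l̄ ∖ {q̄}`. -/
def ResFlagPlane (f : Projectivization ℚ V → A) (p : ℕ) (B : Set V) : Prop :=
  ∃ q w : V, q ∈ B \ pSMul p B ∧ w ∈ B \ pSMul p B ∧ ¬ ZpRelV p B q w ∧
    (∀ x y : V, ∀ (hx : x ≠ 0) (hy : y ≠ 0),
      (∃ a : ℚ, a ≠ 0 ∧ a • x ∈ (B \ pSMul p B) ∧ a • x ∉ resLineV p B q w) →
      (∃ b : ℚ, b ≠ 0 ∧ b • y ∈ (B \ pSMul p B) ∧ b • y ∉ resLineV p B q w) →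
      f (Projectivization.mk ℚ x hx) = f (Projectivization.mk ℚ y hy)) ∧
    (∀ x y : V, ∀ (hx : x ≠ 0) (hy : y ≠ 0),
      (∃ a : ℚ, a ≠ 0 ∧ a • x ∈ resLineV p B q w \ pSMul p B) → ¬ ZpRelV p B x q →
      (∃ b : ℚ, b ≠ 0 ∧ b • y ∈ resLineV p B q w \ pSMul p B) → ¬ ZpRelV p B y q →
      f (Projectivization.mk ℚ x hx) = f (Projectivization.mk ℚ y hy))

/-- `f` is induced via `B` from a *flag map* `f̄ : ℙ(B/pB) → A` (general
dimension): there is a chain of sublattices from `pB` to `B` (i.e. a flag of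
subspaces of `B/pB`) with `f` constant on each successive difference. -/
def ResChainFlagOn (f : Projectivization ℚ V → A) (p : ℕ) (B : Set V) : Prop :=
  ∃ c : ℕ → Set V, c 0 = pSMul p B ∧ (∃ n, c n = B) ∧ (∀ i, c i ⊆ c (i + 1)) ∧
    (∀ i, (∀ x ∈ c i, ∀ y ∈ c i, x + y ∈ c i) ∧
      (∀ q : ℚ, ¬ (p ∣ q.den) → ∀ x ∈ c i, q • x ∈ c i)) ∧
    ∀ i, ∀ x y : V, ∀ (hx : x ≠ 0) (hy : y ≠ 0),
      (∃ a : ℚ, a ≠ 0 ∧ a • x ∈ c (i + 1) \ c i) →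
      (∃ b : ℚ, b ≠ 0 ∧ b • y ∈ c (i + 1) \ c i) →
      f (Projectivization.mk ℚ x hx) = f (Projectivization.mk ℚ y hy)

/-- `f` is a flag map on the finite-dimensional projective subspace
`ℙ(W) ⊆ ℙ(V)` over `ℚ`: either a chain (flag) of subspaces as over any field,
or induced via a `ℤ_(p)`-lattice `B` in `W` from a flag map on `ℙ(B/pB)`. -/
def QFlagOn (f : Projectivization ℚ V → A) (W : Submodule ℚ V) : Prop :=
  ChainFlagOn f W ∨
    ∃ p : ℕ, p.Prime ∧ ∃ B : Set V, IsZpLatIn p W B ∧ ResChainFlagOn f p B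

/-- A flag map on `ℙ(V)` over `ℚ` (possibly infinite-dimensional): the
restriction to every finite-dimensional projective subspace is a flag map. -/
def QFlagMap (f : Projectivization ℚ V → A) : Prop :=
  ∀ W : Submodule ℚ V, FiniteDimensional ℚ W → QFlagOn f W

end PreludeBQ

/-
Colour the nonzero vectors of `V` by the value of `f` on their class. The hypothesis on lines says
that the colour of `u + c • v` switches from that of `u` to that of `v` when the `p`-adic valuation
of `c` crosses a threshold. The thresholds `r`, `s`, `t` of the pairs `01`, `12`, `02` of three
differently coloured vectors satisfy `r + s - 1 ≤ t ≤ r + s`, and this is exactly what is needed to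
give the three vectors integer weights, pairwise incongruent modulo 3, such that (with `p` of
weight 3) the colour of any vector is that of its term of least weight. The least weight is the
level in a complete chain of lattices `⋯ ⊃ L m ⊃ L (m + 1) ⊃ ⋯` with `L (m + 3) = p L m`, and `f` is
the level modulo 3.

Each `L m` induces `f` from a flag map, the flag being `L m ⊃ L (m + 1) ⊃ L (m + 2) ⊃ p L m`.
Conversely, in a lattice with such a flag the sum of vectors from two strata has the colour of the
coarser one, so that the levels in the strata increase and stay within one period; this forces the
lattice to be some `L m`. Finally `L m` and `L m'` are equivalent if and only if `m ≡ m'` modulo 3.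
-/

open scoped Pointwise

section Scalars

variable (p : ℕ) [Fact p.Prime]

/-- The ring `ℤ_(p)` as a subring of `ℚ`, so that lattices can be handled as submodules over it. -/
def zpRing : Subring ℚ := (Rat.padicValuation p).integer

variable {p}

theorem mem_zpRing_iff_not_dvd_den {a : ℚ} : a ∈ zpRing p ↔ ¬ p ∣ a.den :=
  Rat.padicValuation_le_one_iff

theorem mem_zpRing_iff_padicValRat_nonneg {a : ℚ} : a ∈ zpRing p ↔ 0 ≤ padicValRat p a := by
  obtain rfl | ha := eq_or_ne a 0
  · simp [zero_mem]
  · change Rat.padicValuation p a ≤ 1 ↔ _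
    simp [Rat.padicValuation, ha, ← WithZero.exp_zero, -WithZero.exp_neg]

theorem padicValRat_zpow_self (k : ℤ) : padicValRat p ((p : ℚ) ^ k) = k := by
  rw [padicValRat.zpow, padicValRat.self (Fact.out : p.Prime).one_lt, mul_one]

theorem exists_pow_mul_mem_zpRing (a : ℚ) : ∃ k : ℕ, (p : ℚ) ^ k * a ∈ zpRing p := by
  have hp : (p : ℚ) ≠ 0 := NeZero.ne _
  obtain rfl | ha := eq_or_ne a 0
  · exact ⟨0, by simp [zero_mem]⟩
  · refine ⟨(padicValRat p a).natAbs, mem_zpRing_iff_padicValRat_nonneg.2 ?_⟩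
    rw [padicValRat.mul (pow_ne_zero _ hp) ha, ← zpow_natCast, padicValRat_zpow_self]
    omega

end Scalars

section Lattices

variable {p : ℕ} [Fact p.Prime] {V : Type v} [AddCommGroup V] [Module ℚ V]
  {L : Submodule (zpRing p) V} {v q x : V}

theorem smul_mem_of_padicValRat_nonneg {a : ℚ} (ha : 0 ≤ padicValRat p a) (hv : v ∈ L) :
    a • v ∈ L :=
  L.smul_mem ⟨a, mem_zpRing_iff_padicValRat_nonneg.2 ha⟩ hv

theorem mem_smul_iff_inv_smul_mem : v ∈ (p : ℚ) • L ↔ (p : ℚ)⁻¹ • v ∈ L := by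
  have hp : (p : ℚ) ≠ 0 := NeZero.ne _
  rw [← SetLike.mem_coe, Submodule.coe_pointwise_smul, Set.mem_smul_set_iff_inv_smul_mem₀ hp,
    SetLike.mem_coe]

theorem smul_le_self : (p : ℚ) • L ≤ L := fun v hv => by
  have hp : (p : ℚ) ≠ 0 := NeZero.ne _
  rw [← smul_inv_smul₀ hp v]
  exact smul_mem_of_padicValRat_nonneg (by simp) (mem_smul_iff_inv_smul_mem.1 hv)

theorem smul_mem_smul_of_padicValRat_pos {a : ℚ} (ha : 0 < padicValRat p a) (hv : v ∈ L) :
    a • v ∈ (p : ℚ) • L := by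
  have hp : (p : ℚ) ≠ 0 := NeZero.ne _
  have ha0 : a ≠ 0 := by rintro rfl; simp at ha
  rw [mem_smul_iff_inv_smul_mem, smul_smul]
  refine smul_mem_of_padicValRat_nonneg ?_ hv
  rw [padicValRat.mul (inv_ne_zero hp) ha0, padicValRat.inv,
    padicValRat.self (Fact.out : p.Prime).one_lt]
  omega

theorem padicValRat_nonpos_of_smul_notMem_smul {a : ℚ} (hv : v ∈ L)
    (hav : a • v ∉ (p : ℚ) • L) : padicValRat p a ≤ 0 :=
  not_lt.1 fun ha => hav (smul_mem_smul_of_padicValRat_pos ha hv)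

theorem padicValRat_nonneg_of_smul_mem {a : ℚ} (ha : a ≠ 0) (hv : v ∉ (p : ℚ) • L)
    (hav : a • v ∈ L) : 0 ≤ padicValRat p a := by
  have := padicValRat_nonpos_of_smul_notMem_smul (a := a⁻¹) hav (by rwa [inv_smul_smul₀ ha])
  rwa [padicValRat.inv, neg_nonpos] at this

theorem pSMul_coe (L : Submodule (zpRing p) V) : pSMul p (L : Set V) = ↑((p : ℚ) • L) := by
  ext z
  simp only [pSMul, Submodule.coe_pointwise_smul, Set.mem_smul_set, Set.mem_ofPred_eq, eq_comm]

theorem zpSpanV_eq_span (s : Finset V) :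
    zpSpanV p s = Submodule.span (zpRing p) (s : Set V) := by
  ext z
  rw [SetLike.mem_coe, Submodule.mem_span_finset]
  constructor
  · rintro ⟨f, hf, rfl⟩
    classical
    refine ⟨fun t => if t ∈ s then ⟨f t, mem_zpRing_iff_not_dvd_den.2 (hf t)⟩ else 0, ?_, ?_⟩
    · intro t ht
      by_contra hts
      exact ht (if_neg hts)
    · exact Finset.sum_congr rfl fun t ht => by simp only [if_pos ht]; rfl
  · rintro ⟨f, -, rfl⟩
    exact ⟨fun t => f t, fun t => mem_zpRing_iff_not_dvd_den.1 (f t).2, rfl⟩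

theorem isZpLatIn_iff {W : Submodule ℚ V} {B : Set V} :
    IsZpLatIn p W B ↔ ∃ L : Submodule (zpRing p) V,
      L.FG ∧ Submodule.span ℚ (L : Set V) = W ∧ B = L := by
  constructor
  · rintro ⟨⟨s, rfl⟩, hW⟩
    rw [zpSpanV_eq_span] at hW
    exact ⟨_, ⟨s, rfl⟩, hW, zpSpanV_eq_span s⟩
  · rintro ⟨_, ⟨s, rfl⟩, hW, rfl⟩
    exact ⟨⟨s, (zpSpanV_eq_span s).symm⟩, hW⟩

theorem resLineV_coe (L : Submodule (zpRing p) V) (q w : V) :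
    resLineV p (L : Set V) q w = ↑(Submodule.span (zpRing p) {q, w} ⊔ (p : ℚ) • L) := by
  ext z
  simp only [resLineV, pSMul_coe, SetLike.mem_coe, Set.mem_ofPred_eq, Submodule.mem_sup,
    Submodule.mem_span_pair]
  constructor
  · rintro ⟨a, b, ha, hb, y, hy, rfl⟩
    exact ⟨_, ⟨⟨a, mem_zpRing_iff_not_dvd_den.2 ha⟩, ⟨b, mem_zpRing_iff_not_dvd_den.2 hb⟩, rfl⟩,
      y, hy, rfl⟩
  · rintro ⟨_, ⟨a, b, rfl⟩, y, hy, rfl⟩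
    exact ⟨a, b, mem_zpRing_iff_not_dvd_den.1 a.2, mem_zpRing_iff_not_dvd_den.1 b.2, y, hy, rfl⟩

theorem exists_pow_smul_mem_of_mem_span (hv : v ∈ Submodule.span ℚ (L : Set V)) :
    ∃ k : ℕ, (p : ℚ) ^ k • v ∈ L := by
  induction hv using Submodule.span_induction with
  | mem v hv => exact ⟨0, by simpa using hv⟩
  | zero => exact ⟨0, by simp⟩
  | add u v _ _ hu hv =>
    obtain ⟨k, hk⟩ := hu
    obtain ⟨l, hl⟩ := hv
    refine ⟨k + l, ?_⟩
    rw [smul_add]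
    refine add_mem ?_ ?_
    · rw [pow_add, mul_comm, mul_smul]
      exact smul_mem_of_padicValRat_nonneg (by simp) hk
    · rw [pow_add, mul_smul]
      exact smul_mem_of_padicValRat_nonneg (by simp) hl
  | smul a v _ hv =>
    obtain ⟨k, hk⟩ := hv
    obtain ⟨l, hl⟩ := exists_pow_mul_mem_zpRing (p := p) a
    refine ⟨l + k, ?_⟩
    rw [smul_smul, pow_add, mul_right_comm, mul_smul]
    exact L.smul_mem ⟨_, hl⟩ hk

theorem exists_pow_mul_apply_mem_zpRing_of_fg (hL : L.FG) (φ : V →ₗ[ℚ] ℚ) :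
    ∃ k : ℕ, ∀ z ∈ L, (p : ℚ) ^ k * φ z ∈ zpRing p := by
  have hpow : ∀ k : ℕ, (p : ℚ) ^ k ∈ zpRing p := fun k => pow_mem (natCast_mem _ p) k
  induction L, hL using Submodule.fg_induction with
  | singleton x =>
    obtain ⟨k, hk⟩ := exists_pow_mul_mem_zpRing (p := p) (φ x)
    refine ⟨k, fun z hz => ?_⟩
    obtain ⟨a, rfl⟩ := Submodule.mem_span_singleton.1 hz
    rw [Subring.smul_def, map_smul, smul_eq_mul, mul_left_comm]
    exact mul_mem a.2 hk
  | sup L₁ L₂ _ _ h₁ h₂ =>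
    obtain ⟨k, hk⟩ := h₁
    obtain ⟨l, hl⟩ := h₂
    refine ⟨k + l, fun z hz => ?_⟩
    obtain ⟨x, hx, y, hy, rfl⟩ := Submodule.mem_sup.1 hz
    rw [map_add, mul_add, pow_add, mul_right_comm, mul_assoc _ _ (φ y)]
    exact add_mem (mul_mem (hk x hx) (hpow l)) (mul_mem (hpow k) (hl y hy))

theorem exists_smul_mem_notMem_smul (hL : L.FG) (hv : v ∈ Submodule.span ℚ (L : Set V))
    (hv0 : v ≠ 0) : ∃ c : ℚ, c ≠ 0 ∧ c • v ∈ L ∧ c • v ∉ (p : ℚ) • L := by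
  have hp : (p : ℚ) ≠ 0 := NeZero.ne _
  obtain ⟨φ, hφ⟩ : ∃ φ : Module.Dual ℚ V, φ v ≠ 0 := by
    by_contra! h
    exact hv0 ((Module.forall_dual_apply_eq_zero_iff ℚ v).1 h)
  obtain ⟨K, hK⟩ := exists_pow_mul_apply_mem_zpRing_of_fg hL φ
  have hbound : ∀ k : ℤ, (p : ℚ) ^ k • v ∈ L → -K - padicValRat p (φ v) ≤ k := by
    intro k hk
    have := mem_zpRing_iff_padicValRat_nonneg.1 (hK _ hk)
    rw [map_smul, smul_eq_mul, padicValRat.mul (pow_ne_zero _ hp)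
      (mul_ne_zero (zpow_ne_zero _ hp) hφ), padicValRat.mul (zpow_ne_zero _ hp) hφ,
      ← zpow_natCast, padicValRat_zpow_self, padicValRat_zpow_self] at this
    omega
  obtain ⟨l, hl⟩ := exists_pow_smul_mem_of_mem_span hv
  obtain ⟨k, hk, hmin⟩ := Int.exists_least_of_bdd ⟨_, hbound⟩ ⟨l, by rwa [zpow_natCast]⟩
  refine ⟨(p : ℚ) ^ k, zpow_ne_zero _ hp, hk, fun hmem => ?_⟩
  rw [mem_smul_iff_inv_smul_mem, smul_smul, ← zpow_neg_one, ← zpow_add₀ hp] at hmem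
  have := hmin _ hmem
  omega

theorem zpRelV_of_mem_span_sup (hq : q ∈ L) (hx : x ∈ Submodule.span (zpRing p) {q} ⊔ (p : ℚ) • L)
    (hxp : x ∉ (p : ℚ) • L) : ZpRelV p L x q := by
  obtain ⟨_, hz, y, hy, rfl⟩ := Submodule.mem_sup.1 hx
  obtain ⟨a, rfl⟩ := Submodule.mem_span_singleton.1 hz
  have haq : a • q ∉ (p : ℚ) • L := fun h => hxp (add_mem h hy)
  have ha : (a : ℚ) ≠ 0 := fun h => haq (by simp [Subring.smul_def, h])
  simp only [ZpRelV, pSMul_coe, SetLike.mem_coe]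
  exact ⟨_, a • q, ⟨1, one_ne_zero, (one_smul ℚ _).symm⟩, ⟨a, ha, rfl⟩,
    add_mem (L.smul_mem a hq) (smul_le_self hy), hxp, L.smul_mem a hq, haq, by simpa using hy⟩

theorem not_zpRelV_of_notMem_span_sup (hqp : q ∉ (p : ℚ) • L) (hx : x ∈ L)
    (hxq : x ∉ Submodule.span (zpRing p) {q} ⊔ (p : ℚ) • L) : ¬ ZpRelV p L x q := by
  simp only [ZpRelV, pSMul_coe, SetLike.mem_coe]
  rintro ⟨_, _, ⟨a, ha, rfl⟩, ⟨b, hb, rfl⟩, -, hax, hbq, -, hsub⟩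
  refine hxq ?_
  have hva : 0 ≤ padicValRat p a⁻¹ := by
    rw [padicValRat.inv, neg_nonneg]
    exact padicValRat_nonpos_of_smul_notMem_smul hx hax
  have hvb : 0 ≤ padicValRat p b := padicValRat_nonneg_of_smul_mem hb hqp hbq
  rw [← inv_smul_smul₀ ha x, ← sub_add_cancel (a • x) (b • q)]
  exact smul_mem_of_padicValRat_nonneg hva (add_mem (Submodule.mem_sup_right hsub)
    (Submodule.mem_sup_left (smul_mem_of_padicValRat_nonneg hvb
      (Submodule.mem_span_singleton_self q))))

end Lattices

section Splitting

variable {p : ℕ} {V : Type v} [AddCommGroup V] [Module ℚ V] {A : Type w}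
  {F : V → A} {u v w : V} {r s t : ℤ}

/-- On the pencil `u + c • v`, `c ≠ 0`, the function `F` takes the value `F u` when `c` is
`p`-adically small, and `F v` when it is large; the threshold is at valuation `t`. -/
def SplitAt (p : ℕ) (F : V → A) (u v : V) (t : ℤ) : Prop :=
  ∀ c : ℚ, c ≠ 0 → F (u + c • v) = if t ≤ padicValRat p c then F u else F v

/-- A *split colouring* of `V`: invariant under scaling, split at some threshold along the pencil of
any two nonzero vectors of different colours, and with a colour reserved for the zero vector. -/
structure IsSplitColouring (p : ℕ) (F : V → A) : Prop where
  smul : ∀ c : ℚ, c ≠ 0 → ∀ v, F (c • v) = F v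
  ne_zero : ∀ v, v ≠ 0 → F v ≠ F 0
  exists_splitAt : ∀ u v, u ≠ 0 → v ≠ 0 → F u ≠ F v → ∃ t, SplitAt p F u v t

namespace IsSplitColouring

theorem apply_add (hF : IsSplitColouring p F) (huv : F u ≠ F v) :
    F (u + v) = F u ∨ F (u + v) = F v := by
  obtain rfl | hu := eq_or_ne u 0
  · exact .inr (by rw [zero_add])
  obtain rfl | hv := eq_or_ne v 0
  · exact .inl (by rw [add_zero])
  obtain ⟨t, ht⟩ := hF.exists_splitAt u v hu hv huv
  have := ht 1 one_ne_zero
  rw [one_smul] at this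
  split_ifs at this
  exacts [.inl this, .inr this]

theorem exists_apply_sum_eq (hF : IsSplitColouring p F) {ι : Type*} {s : Finset ι} {v : ι → V}
    (hs : s.Nonempty) (hv : Set.InjOn (fun i => F (v i)) s) :
    ∃ i ∈ s, F (∑ i ∈ s, v i) = F (v i) := by
  induction hs using Finset.Nonempty.cons_induction with
  | singleton i => exact ⟨i, by simp⟩
  | cons i s hi _ ih =>
    rw [Finset.coe_cons] at hv
    obtain ⟨j, hj, hjs⟩ := ih (hv.mono (Set.subset_insert _ _))
    have hne : F (v i) ≠ F (∑ i ∈ s, v i) := by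
      rw [hjs]
      exact fun h => hi (hv (.inl rfl) (.inr hj) h ▸ hj)
    rw [Finset.sum_cons]
    obtain h | h := hF.apply_add hne
    · exact ⟨i, by simp, h⟩
    · exact ⟨j, by simp [hj], h.trans hjs⟩

theorem apply_sum_eq_of_dominant (hF : IsSplitColouring p F) {ι : Type*}
    {s : Finset ι} {v : ι → V} {i : ι} (hi : i ∈ s) (hv : Set.InjOn (fun i => F (v i)) s)
    (hdom : ∀ j ∈ s, j ≠ i → F (v i + v j) = F (v i)) : F (∑ i ∈ s, v i) = F (v i) := by
  classical
  obtain ⟨j, hj, hjs⟩ := hF.exists_apply_sum_eq ⟨i, hi⟩ hv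
  obtain rfl | hji := eq_or_ne j i
  · exact hjs
  exfalso
  have hsum : ∑ i ∈ s, v i = v i + v j + ∑ k ∈ (s.erase i).erase j, v k := by
    rw [add_assoc, Finset.add_sum_erase _ _ (Finset.mem_erase.2 ⟨hji, hj⟩),
      Finset.add_sum_erase _ _ hi]
  have hij : F (v j) ≠ F (v i) := fun h => hji (hv hj hi h)
  obtain hrest | hrest := ((s.erase i).erase j).eq_empty_or_nonempty
  · rw [hsum, hrest, Finset.sum_empty, add_zero, hdom j hj hji] at hjs
    exact hij hjs.symm
  · have hsub : ((s.erase i).erase j : Set ι) ⊆ s := fun k hk => by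
      exact Finset.mem_of_mem_erase (Finset.mem_of_mem_erase hk)
    obtain ⟨k, hk, hks⟩ := hF.exists_apply_sum_eq hrest (hv.mono hsub)
    obtain ⟨hkj, hki, hk⟩ : k ≠ j ∧ k ≠ i ∧ k ∈ s := by simpa using hk
    have hne : F (v i + v j) ≠ F (∑ k ∈ (s.erase i).erase j, v k) := by
      rw [hdom j hj hji, hks]
      exact fun h => hki (hv hk hi h.symm)
    rw [hsum] at hjs
    obtain h | h := hF.apply_add hne
    · exact hij (hjs.symm.trans (h.trans (hdom j hj hji)))
    · exact hkj (hv hk hj (hks.symm.trans (h.symm.trans hjs)))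

theorem injOn_smul (hF : IsSplitColouring p F) {ι : Type*} {e : ι → V} {x : ι → ℚ} {s : Finset ι}
    (he : Function.Injective fun i => F (e i)) (hx : ∀ i ∈ s, x i ≠ 0) :
    Set.InjOn (fun i => F (x i • e i)) s := by
  intro i hi j hj hij
  simp only [hF.smul _ (hx i hi), hF.smul _ (hx j hj)] at hij
  exact he hij

theorem linearIndependent (hF : IsSplitColouring p F) {ι : Type*} {e : ι → V}
    (he : Function.Injective fun i => F (e i)) (he0 : ∀ i, e i ≠ 0) : LinearIndependent ℚ e := by
  classical
  rw [linearIndependent_iff']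
  intro s x hsum i hi
  by_contra hxi
  have hx : ∀ j ∈ s.filter fun j => x j ≠ 0, x j ≠ 0 := fun j hj => (Finset.mem_filter.1 hj).2
  obtain ⟨j, hj, hjs⟩ := hF.exists_apply_sum_eq ⟨i, Finset.mem_filter.2 ⟨hi, hxi⟩⟩
    (hF.injOn_smul he hx)
  have hfilter : ∑ j ∈ s with x j ≠ 0, x j • e j = 0 :=
    (Finset.sum_filter_of_ne fun _ _ => left_ne_zero_of_smul).trans hsum
  rw [hfilter, hF.smul _ (hx j hj)] at hjs
  exact hF.ne_zero _ (he0 j) hjs.symm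

end IsSplitColouring

variable [Fact p.Prime]

theorem SplitAt.smul (hF : ∀ c : ℚ, c ≠ 0 → ∀ v, F (c • v) = F v) (h : SplitAt p F u v t)
    {a b : ℚ} (ha : a ≠ 0) (hb : b ≠ 0) :
    SplitAt p F (a • u) (b • v) (t + padicValRat p a - padicValRat p b) := by
  intro c hc
  have hab : a • u + c • b • v = a • (u + (a⁻¹ * (c * b)) • v) := by
    rw [smul_add, smul_smul, smul_smul, mul_inv_cancel_left₀ ha]
  rw [hab, hF a ha, hF a ha, hF b hb, h _ (by positivity), padicValRat.mul (inv_ne_zero ha)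
    (mul_ne_zero hc hb), padicValRat.mul hc hb, padicValRat.inv]
  exact if_congr (by omega) rfl rfl

theorem SplitAt.symm (hF : ∀ c : ℚ, c ≠ 0 → ∀ v, F (c • v) = F v) (h : SplitAt p F u v t) :
    SplitAt p F v u (1 - t) := by
  intro c hc
  have hvu : v + c • u = c • (u + c⁻¹ • v) := by rw [smul_add, smul_inv_smul₀ hc, add_comm]
  rw [hvu, hF c hc, h _ (inv_ne_zero hc), padicValRat.inv]
  split_ifs <;> first | rfl | omega

namespace IsSplitColouring

/-- Scaling `v` and `w` to sit just below their thresholds, a violation would let the colours of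
`u + v`, `v + w` and `u + w` force three different colours on `u + v + w`. -/
theorem threshold_le_add (hF : IsSplitColouring p F) (huv : F u ≠ F v) (hvw : F v ≠ F w)
    (huw : F u ≠ F w) (hs : SplitAt p F u v s) (ht : SplitAt p F v w t)
    (hr : SplitAt p F u w r) : r ≤ s + t := by
  by_contra! hlt
  have hp : (p : ℚ) ≠ 0 := NeZero.ne _
  have hpow : ∀ k : ℤ, (p : ℚ) ^ k ≠ 0 := fun k => zpow_ne_zero k hp
  set v' := (p : ℚ) ^ s • v with hv'
  set w' := (p : ℚ) ^ (s + t) • w with hw'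
  have hFv : F v' = F v := hF.smul _ (hpow s) v
  have hFw : F w' = F w := hF.smul _ (hpow _) w
  have huv' : F (u + v') = F u := by
    rw [hs _ (hpow s), padicValRat_zpow_self, if_pos le_rfl]
  have hvw' : F (v' + w') = F v := by
    rw [hv', hw', zpow_add₀ hp, mul_smul, ← smul_add, hF.smul _ (hpow s), ht _ (hpow t),
      padicValRat_zpow_self, if_pos le_rfl]
  have huw' : F (u + w') = F w := by
    rw [hr _ (hpow _), padicValRat_zpow_self, if_neg hlt.not_ge]
  have h₁ : F (u + v' + w') = F u ∨ F (u + v' + w') = F w := by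
    simpa only [huv', hFw] using hF.apply_add (u := u + v') (v := w') (by rwa [huv', hFw])
  have h₂ : F (u + v' + w') = F u ∨ F (u + v' + w') = F v := by
    simpa only [hvw', add_assoc] using
      hF.apply_add (u := u) (v := v' + w') (by rwa [hvw'])
  have h₃ : F (u + v' + w') = F w ∨ F (u + v' + w') = F v := by
    simpa only [huw', hFv, add_right_comm] using
      hF.apply_add (u := u + w') (v := v') (by rw [huw', hFv]; exact hvw.symm)
  grind

theorem add_le_threshold_add_one (hF : IsSplitColouring p F) (huv : F u ≠ F v) (hvw : F v ≠ F w)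
    (huw : F u ≠ F w) (hs : SplitAt p F u v s) (ht : SplitAt p F v w t)
    (hr : SplitAt p F u w r) : s + t ≤ r + 1 := by
  have := hF.threshold_le_add hvw.symm huv.symm huw.symm (ht.symm hF.smul) (hs.symm hF.smul)
    (hr.symm hF.smul)
  omega

end IsSplitColouring

end Splitting

section ResidueFlags

variable {p : ℕ} [Fact p.Prime] {V : Type v} [AddCommGroup V] [Module ℚ V] {A : Type w}
  {F : V → A} {n : ℕ} {C : Fin (n + 1) → Submodule (zpRing p) V} {u v : V}

/-- A flag of `C 0 / p C 0`, encoded by its preimages `C 0 ≥ C 1 ≥ ⋯ ≥ C n = p C 0` in the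
lattice `C 0`, such that `F` is constant on each difference `C i ∖ C (i + 1)`. -/
structure IsResidueFlag (F : V → A) (C : Fin (n + 1) → Submodule (zpRing p) V) : Prop where
  antitone : Antitone C
  last_eq : C (Fin.last n) = (p : ℚ) • C 0
  apply_eq : ∀ (i : Fin n) (u v : V), u ∈ C i.castSucc → u ∉ C i.succ → v ∈ C i.castSucc →
    v ∉ C i.succ → F u = F v

namespace IsResidueFlag

theorem exists_stratum (hC : IsResidueFlag F C) (hv : v ∈ C 0) (hvp : v ∉ (p : ℚ) • C 0) :
    ∃ i : Fin n, v ∈ C i.castSucc ∧ v ∉ C i.succ := by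
  by_contra! h
  rw [← hC.last_eq] at hvp
  exact hvp (Fin.induction (motive := fun i => v ∈ C i) hv h (Fin.last n))

theorem splitAt (hC : IsResidueFlag F C) (hF : ∀ c : ℚ, c ≠ 0 → ∀ v, F (c • v) = F v)
    {i j : Fin n} (hij : i < j) (hu : u ∈ C i.castSucc) (hui : u ∉ C i.succ)
    (hv : v ∈ C j.castSucc) (hvj : v ∉ C j.succ) : SplitAt p F u v 0 := by
  intro c hc
  split_ifs with hval
  · have hcv : c • v ∈ C i.succ := smul_mem_of_padicValRat_nonneg hval
      (hC.antitone (Fin.castSucc_lt_iff_succ_le.1 (Fin.castSucc_lt_castSucc_iff.2 hij)) hv)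
    have hle : C i.succ ≤ C i.castSucc := hC.antitone Fin.castSucc_lt_succ.le
    exact hC.apply_eq i _ _ (add_mem hu (hle hcv))
      (fun h => hui ((add_mem_cancel_right hcv).1 h)) hu hui
  · have hcu : c⁻¹ • u ∈ C (Fin.last n) := by
      rw [hC.last_eq]
      exact smul_mem_smul_of_padicValRat_pos (by rw [padicValRat.inv]; omega)
        (hC.antitone (Fin.zero_le _) hu)
    have heq : u + c • v = c • (c⁻¹ • u + v) := by rw [smul_add, smul_inv_smul₀ hc]
    rw [heq, hF c hc]
    exact hC.apply_eq j _ _ (add_mem (hC.antitone (Fin.le_last _) hcu) hv)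
      (fun h => hvj ((add_mem_cancel_left (hC.antitone (Fin.le_last _) hcu)).1 h)) hv hvj

theorem exists_splitAt (hC : IsResidueFlag F C) (hF : ∀ c : ℚ, c ≠ 0 → ∀ v, F (c • v) = F v)
    (hfg : (C 0).FG) (hu : u ∈ Submodule.span ℚ (C 0 : Set V)) (hu0 : u ≠ 0)
    (hv : v ∈ Submodule.span ℚ (C 0 : Set V)) (hv0 : v ≠ 0) (huv : F u ≠ F v) :
    ∃ t, SplitAt p F u v t := by
  obtain ⟨a, ha, hau, haup⟩ := exists_smul_mem_notMem_smul hfg hu hu0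
  obtain ⟨b, hb, hbv, hbvp⟩ := exists_smul_mem_notMem_smul hfg hv hv0
  obtain ⟨i, hi, hi'⟩ := hC.exists_stratum hau haup
  obtain ⟨j, hj, hj'⟩ := hC.exists_stratum hbv hbvp
  obtain ⟨t, ht⟩ : ∃ t, SplitAt p F (a • u) (b • v) t := by
    rcases lt_trichotomy i j with hij | rfl | hji
    · exact ⟨_, hC.splitAt hF hij hi hi' hj hj'⟩
    · refine absurd ?_ huv
      rw [← hF a ha u, ← hF b hb v]
      exact hC.apply_eq i _ _ hi hi' hj hj'
    · exact ⟨_, (hC.splitAt hF hji hj hj' hi hi').symm hF⟩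
  have := ht.smul hF (inv_ne_zero ha) (inv_ne_zero hb)
  rw [inv_smul_smul₀ ha, inv_smul_smul₀ hb] at this
  exact ⟨_, this⟩

end IsResidueFlag

end ResidueFlags

section Colour

variable {V : Type v} [AddCommGroup V] [Module ℚ V] {A : Type w} {f : Projectivization ℚ V → A}
  {u v : V}

open Classical in
/-- The lift of `f : ℙ(V) → A` to all of `V`; the zero vector gets a colour of its own, so that
colours also detect whether a vector vanishes. -/
noncomputable def colour (f : Projectivization ℚ V → A) (v : V) : Option A :=
  if h : v = 0 then none else some (f (Projectivization.mk ℚ v h))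

theorem colour_of_ne_zero (hv : v ≠ 0) : colour f v = some (f (Projectivization.mk ℚ v hv)) :=
  dif_neg hv

theorem colour_eq_iff (hu : u ≠ 0) (hv : v ≠ 0) : colour f u = colour f v ↔
    f (Projectivization.mk ℚ u hu) = f (Projectivization.mk ℚ v hv) := by
  rw [colour_of_ne_zero hu, colour_of_ne_zero hv, Option.some_inj]

theorem colour_ne_colour_zero (hv : v ≠ 0) : colour f v ≠ colour f 0 := by
  simp [colour, hv]

theorem colour_smul {c : ℚ} (hc : c ≠ 0) (v : V) : colour f (c • v) = colour f v := by
  obtain rfl | hv := eq_or_ne v 0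
  · rw [smul_zero]
  · rw [colour_eq_iff (smul_ne_zero hc hv) hv]
    exact congrArg f ((Projectivization.mk_eq_mk_iff' ℚ _ _ _ _).2 ⟨c, rfl⟩)

theorem finrank_span_pair_of_colour_ne (hu : u ≠ 0) (hv : v ≠ 0)
    (huv : colour f u ≠ colour f v) : Module.finrank ℚ (Submodule.span ℚ {u, v}) = 2 := by
  have hind : LinearIndependent ℚ ![u, v] := by
    refine (LinearIndependent.pair_iff' hu).2 fun a ha => ?_
    have ha0 : a ≠ 0 := by
      rintro rfl
      exact hv (by rw [← ha, zero_smul])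
    exact huv (by rw [← ha, colour_smul ha0])
  rw [← Matrix.range_cons_cons_empty u v ![], finrank_span_eq_card hind, Fintype.card_fin]

theorem exists_injective_colour_of_le_encard {n : ℕ} (hn : n ≤ (Set.range f).encard) :
    ∃ e : Fin n → V, (Function.Injective fun i => colour f (e i)) ∧ ∀ i, e i ≠ 0 := by
  obtain ⟨s, hs, hcard⟩ := Set.exists_subset_encard_eq hn
  have : Finite s := Set.finite_of_encard_eq_coe hcard
  let g : Fin n ≃ s := (Finite.equivFinOfCardEq (congrArg ENat.toNat hcard)).symm
  choose x hx using fun i => hs (g i).2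
  refine ⟨fun i => (x i).rep, fun i j hij => ?_, fun i => (x i).rep_nonzero⟩
  simp only [colour_eq_iff (x _).rep_nonzero (x _).rep_nonzero, Projectivization.mk_rep, hx] at hij
  exact g.injective (Subtype.coe_injective hij)

end Colour

section InducedFlags

variable {p : ℕ} [Fact p.Prime] {V : Type v} [AddCommGroup V] [Module ℚ V] {A : Type w}
  {f : Projectivization ℚ V → A} {L M N : Submodule (zpRing p) V}
  {q u v : V}

theorem colour_eq_of_notMem (hu : u ∉ M) (hv : v ∉ N) (h : ∀ (hu : u ≠ 0) (hv : v ≠ 0),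
    f (Projectivization.mk ℚ u hu) = f (Projectivization.mk ℚ v hv)) : colour f u = colour f v :=
  (colour_eq_iff (ne_of_mem_of_not_mem M.zero_mem hu).symm
    (ne_of_mem_of_not_mem N.zero_mem hv).symm).2 (h _ _)

theorem span_singleton_sup_le (hq : q ∈ L) :
    Submodule.span (zpRing p) {q} ⊔ (p : ℚ) • L ≤ L :=
  sup_le ((Submodule.span_singleton_le_iff_mem _ _).2 hq) smul_le_self

theorem InducedOn.colour_eq_of_mem_span_sup (hL : InducedOn f (Submodule.span ℚ L) p L)
    (hq : q ∈ L) (hqp : q ∉ (p : ℚ) • L) (hv : v ∈ Submodule.span (zpRing p) {q} ⊔ (p : ℚ) • L)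
    (hvp : v ∉ (p : ℚ) • L) : colour f v = colour f q :=
  colour_eq_of_notMem hvp hqp fun _ _ => hL _ _ _ _
    (Submodule.subset_span (span_singleton_sup_le hq hv)) (Submodule.subset_span hq)
    (zpRelV_of_mem_span_sup hq hv hvp)

theorem InducedOn.isResidueFlag_line (hL : InducedOn f (Submodule.span ℚ L) p L)
    (hq : q ∈ (L : Set V) \ pSMul p L)
    (hf : ∀ x y : V, ∀ (hx : x ≠ 0) (hy : y ≠ 0), x ∈ Submodule.span ℚ (L : Set V) →
      y ∈ Submodule.span ℚ (L : Set V) → ¬ ZpRelV p L x q → ¬ ZpRelV p L y q →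
      f (Projectivization.mk ℚ x hx) = f (Projectivization.mk ℚ y hy)) :
    IsResidueFlag (colour f)
      ![L, Submodule.span (zpRing p) {q} ⊔ (p : ℚ) • L, (p : ℚ) • L] := by
  obtain ⟨hqL, hqp⟩ := hq
  rw [pSMul_coe, SetLike.mem_coe] at hqp
  refine ⟨Fin.antitone_iff_succ_le.2 fun i => ?_, rfl, fun i u v hu hu' hv hv' => ?_⟩
  · fin_cases i
    exacts [span_singleton_sup_le hqL, le_sup_right]
  · fin_cases i
    · exact colour_eq_of_notMem hu' hv' fun _ _ =>
        hf _ _ _ _ (Submodule.subset_span hu) (Submodule.subset_span hv)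
          (not_zpRelV_of_notMem_span_sup hqp hu hu') (not_zpRelV_of_notMem_span_sup hqp hv hv')
    · exact (hL.colour_eq_of_mem_span_sup hqL hqp hu hu').trans
        (hL.colour_eq_of_mem_span_sup hqL hqp hv hv').symm

theorem ResFlagPlane.exists_isResidueFlag (hf : ResFlagPlane f p L)
    (hL : InducedOn f (Submodule.span ℚ L) p L) :
    ∃ C : Fin 4 → Submodule (zpRing p) V, C 0 = L ∧ IsResidueFlag (colour f) C := by
  obtain ⟨q, w, ⟨hqL, hqp⟩, ⟨hwL, -⟩, -, hplane, hline⟩ := hf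
  simp only [resLineV_coe] at hplane hline
  rw [pSMul_coe] at hqp hplane hline
  set ℓ := Submodule.span (zpRing p) {q, w} ⊔ (p : ℚ) • L
  have hℓL : ℓ ≤ L := sup_le (Submodule.span_le.2 (Set.pair_subset hqL hwL)) smul_le_self
  have hpℓ : (p : ℚ) • L ≤ ℓ := le_sup_right
  have hqℓ : Submodule.span (zpRing p) {q} ⊔ (p : ℚ) • L ≤ ℓ :=
    sup_le_sup_right (Submodule.span_mono (Set.singleton_subset_iff.2 (Set.mem_insert _ _))) _
  have hone : ∀ {P : V → Prop} {x}, P x → ∃ a : ℚ, a ≠ 0 ∧ P (a • x) :=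
    fun hx => ⟨1, one_ne_zero, by rwa [one_smul]⟩
  refine ⟨![L, ℓ, Submodule.span (zpRing p) {q} ⊔ (p : ℚ) • L, (p : ℚ) • L], rfl,
    Fin.antitone_iff_succ_le.2 fun i => ?_, rfl, fun i u v hu hu' hv hv' => ?_⟩
  · fin_cases i
    exacts [hℓL, hqℓ, le_sup_right]
  · fin_cases i
    · exact colour_eq_of_notMem hu' hv' fun _ _ => hplane _ _ _ _
        (hone (P := fun x => x ∈ (L : Set V) \ _ ∧ x ∉ _) ⟨⟨hu, fun h => hu' (hpℓ h)⟩, hu'⟩)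
        (hone (P := fun x => x ∈ (L : Set V) \ _ ∧ x ∉ _) ⟨⟨hv, fun h => hv' (hpℓ h)⟩, hv'⟩)
    · exact colour_eq_of_notMem hu' hv' fun _ _ => hline _ _ _ _
        (hone (P := fun x => x ∈ (ℓ : Set V) \ _) ⟨hu, fun h => hu' (Submodule.mem_sup_right h)⟩)
        (not_zpRelV_of_notMem_span_sup hqp (hℓL hu) hu')
        (hone (P := fun x => x ∈ (ℓ : Set V) \ _) ⟨hv, fun h => hv' (Submodule.mem_sup_right h)⟩)
        (not_zpRelV_of_notMem_span_sup hqp (hℓL hv) hv')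
    · exact (hL.colour_eq_of_mem_span_sup hqL hqp hu hu').trans
        (hL.colour_eq_of_mem_span_sup hqL hqp hv hv').symm

theorem isSplitColouring_colour (hlines : ∀ W : Submodule ℚ V, Module.finrank ℚ W = 2 →
    ∃ B : Set V, IsZpLatIn p W B ∧ InducedOn f W p B ∧ ∃ q : V, q ∈ B \ pSMul p B ∧
      ∀ x y : V, ∀ (hx : x ≠ 0) (hy : y ≠ 0), x ∈ W → y ∈ W →
        ¬ ZpRelV p B x q → ¬ ZpRelV p B y q →
        f (Projectivization.mk ℚ x hx) = f (Projectivization.mk ℚ y hy)) :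
    IsSplitColouring p (colour f) where
  smul _ hc v := colour_smul hc v
  ne_zero _ hv := colour_ne_colour_zero hv
  exists_splitAt u v hu hv huv := by
    obtain ⟨B, hB, hind, q, hq, hf⟩ := hlines _ (finrank_span_pair_of_colour_ne hu hv huv)
    obtain ⟨L, hfg, hL, rfl⟩ := isZpLatIn_iff.1 hB
    rw [← hL] at hind hf
    refine (hind.isResidueFlag_line hq hf).exists_splitAt (fun c hc v => colour_smul hc v) hfg
      ?_ hu ?_ hv huv
    all_goals
      change _ ∈ Submodule.span ℚ (L : Set V)
      rw [hL]
      exact Submodule.subset_span (by simp)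

end InducedFlags

section Chains

variable {p : ℕ} {V : Type v} [AddCommGroup V] [Module ℚ V] {n : ℕ}
  {lv : V → ℤ} {u v x y : V} {m m' : ℤ}

/-- `lv v` is the largest `m` with `v ∈ L m`, where `⋯ ⊃ L m ⊃ L (m + 1) ⊃ ⋯` is a complete chain of
`ℤ_(p)`-lattices of period `n`: one has `L (m + n) = p L m`, and each `L m / L (m + 1)` is a line
over `F_p`. The value of `lv` at `0` is irrelevant. -/
structure IsChainLevel (p n : ℕ) (lv : V → ℤ) : Prop where
  smul : ∀ (c : ℚ) (v : V), c ≠ 0 → v ≠ 0 → lv (c • v) = n * padicValRat p c + lv v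
  min_le_add : ∀ u v : V, u ≠ 0 → v ≠ 0 → u + v ≠ 0 → min (lv u) (lv v) ≤ lv (u + v)
  exists_eq : ∀ m : ℤ, ∃ v : V, v ≠ 0 ∧ lv v = m
  exists_lt_sub_smul : ∀ u v : V, u ≠ 0 → v ≠ 0 → lv u = lv v →
    ∃ c : ℚ, c ≠ 0 ∧ padicValRat p c = 0 ∧ (u - c • v ≠ 0 → lv u < lv (u - c • v))

namespace IsChainLevel

theorem smul_modEq (h : IsChainLevel p n lv) {c : ℚ} (hc : c ≠ 0) (hv : v ≠ 0) :
    lv (c • v) ≡ lv v [ZMOD n] := by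
  rw [h.smul c v hc hv]
  exact Int.modEq_iff_add_fac.2 ⟨-padicValRat p c, by ring⟩

theorem neg (h : IsChainLevel p n lv) (hv : v ≠ 0) : lv (-v) = lv v := by
  have := h.smul (-1) v (by norm_num) hv
  simpa [padicValRat.neg] using this

theorem add_of_lt (h : IsChainLevel p n lv) (hu : u ≠ 0) (hv : v ≠ 0) (huv : lv u < lv v) :
    u + v ≠ 0 ∧ lv (u + v) = lv u := by
  have hadd : u + v ≠ 0 := fun h0 => huv.ne (by rw [eq_neg_of_add_eq_zero_left h0, h.neg hv])
  have hle := h.min_le_add u v hu hv hadd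
  have hge := h.min_le_add (u + v) (-v) hadd (neg_ne_zero.2 hv) (by rwa [add_neg_cancel_right])
  rw [add_neg_cancel_right, h.neg hv] at hge
  exact ⟨hadd, by omega⟩

variable [Fact p.Prime]

/-- The lattice `L m` of the chain with level function `lv`. -/
def lattice (h : IsChainLevel p n lv) (m : ℤ) : Submodule (zpRing p) V where
  carrier := {v | v ≠ 0 → m ≤ lv v}
  zero_mem' := fun h0 => absurd rfl h0
  add_mem' := by
    intro u v hu hv huv
    obtain rfl | hu0 := eq_or_ne u 0
    · rw [zero_add] at huv ⊢
      exact hv huv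
    obtain rfl | hv0 := eq_or_ne v 0
    · rw [add_zero] at huv ⊢
      exact hu huv
    exact (le_min (hu hu0) (hv hv0)).trans (h.min_le_add u v hu0 hv0 huv)
  smul_mem' := by
    intro c v hv hcv
    have hc : (c : ℚ) ≠ 0 := left_ne_zero_of_smul (b := v) hcv
    have hv0 : v ≠ 0 := right_ne_zero_of_smul hcv
    have hval := mem_zpRing_iff_padicValRat_nonneg.1 c.2
    have hv := hv hv0
    rw [Subring.smul_def, h.smul _ v hc hv0]
    nlinarith

theorem mem_lattice (h : IsChainLevel p n lv) : v ∈ h.lattice m ↔ (v ≠ 0 → m ≤ lv v) :=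
  Iff.rfl

theorem mem_lattice_of_ne_zero (h : IsChainLevel p n lv) (hv : v ≠ 0) :
    v ∈ h.lattice m ↔ m ≤ lv v := by
  rw [h.mem_lattice, imp_iff_right hv]

theorem notMem_lattice (h : IsChainLevel p n lv) : v ∉ h.lattice m ↔ v ≠ 0 ∧ lv v < m := by
  rw [h.mem_lattice, Classical.not_imp, not_le]

theorem smul_mem_lattice_iff (h : IsChainLevel p n lv) {c : ℚ} (hc : c ≠ 0) :
    c • v ∈ h.lattice m ↔ v ∈ h.lattice (m - n * padicValRat p c) := by
  obtain rfl | hv := eq_or_ne v 0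
  · simp
  rw [h.mem_lattice_of_ne_zero (smul_ne_zero hc hv), h.mem_lattice_of_ne_zero hv,
    h.smul c v hc hv, sub_le_iff_le_add']

theorem smul_lattice (h : IsChainLevel p n lv) {c : ℚ} (hc : c ≠ 0) (m : ℤ) :
    c • h.lattice m = h.lattice (m + n * padicValRat p c) := by
  ext v
  rw [← SetLike.mem_coe, Submodule.coe_pointwise_smul, Set.mem_smul_set_iff_inv_smul_mem₀ hc,
    SetLike.mem_coe, h.smul_mem_lattice_iff (inv_ne_zero hc), padicValRat.inv, mul_neg,
    sub_neg_eq_add]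

theorem prime_smul_lattice (h : IsChainLevel p n lv) (m : ℤ) :
    (p : ℚ) • h.lattice m = h.lattice (m + n) := by
  rw [h.smul_lattice (NeZero.ne _), padicValRat.self (Fact.out : p.Prime).one_lt, mul_one]

theorem span_lattice (h : IsChainLevel p n lv) (hn : 0 < n) (m : ℤ) :
    Submodule.span ℚ (h.lattice m : Set V) = ⊤ := by
  refine eq_top_iff.2 fun v _ => ?_
  have hp : (p : ℚ) ^ |m - lv v| ≠ 0 := zpow_ne_zero _ (NeZero.ne _)
  rw [← inv_smul_smul₀ hp v]
  refine Submodule.smul_mem _ _ (Submodule.subset_span ((h.smul_mem_lattice_iff hp).2 fun _ => ?_))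
  rw [padicValRat_zpow_self]
  have := le_abs_self (m - lv v)
  have := abs_nonneg (m - lv v)
  have : (1 : ℤ) ≤ n := by exact_mod_cast hn
  nlinarith

theorem lattice_injective (h : IsChainLevel p n lv) : Function.Injective h.lattice := by
  have hle : ∀ {m m' : ℤ}, h.lattice m ≤ h.lattice m' → m' ≤ m := by
    intro m m' hmm'
    obtain ⟨v, hv, rfl⟩ := h.exists_eq m
    exact hmm' ((h.mem_lattice_of_ne_zero hv).2 le_rfl) hv
  exact fun m m' hmm' => le_antisymm (hle hmm'.ge) (hle hmm'.le)

theorem latEq_lattice_iff (h : IsChainLevel p n lv) :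
    LatEq (h.lattice m : Set V) (h.lattice m') ↔ m ≡ m' [ZMOD n] := by
  constructor
  · rintro ⟨c, hc, heq⟩
    rw [Set.image_smul, ← Submodule.coe_pointwise_smul, h.smul_lattice hc] at heq
    exact Int.modEq_iff_add_fac.2 ⟨_, h.lattice_injective (SetLike.coe_injective heq)⟩
  · intro hmod
    obtain ⟨k, rfl⟩ := Int.modEq_iff_add_fac.1 hmod
    have hp : (p : ℚ) ^ k ≠ 0 := zpow_ne_zero _ (NeZero.ne _)
    refine ⟨_, hp, ?_⟩
    rw [Set.image_smul, ← Submodule.coe_pointwise_smul, h.smul_lattice hp, padicValRat_zpow_self]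

theorem modEq_of_zpRelV (h : IsChainLevel p n lv) (hx : x ≠ 0) (hy : y ≠ 0)
    (hxy : ZpRelV p (h.lattice m) x y) : lv x ≡ lv y [ZMOD n] := by
  simp only [ZpRelV, pSMul_coe, prime_smul_lattice, SetLike.mem_coe] at hxy
  obtain ⟨_, _, ⟨a, ha, rfl⟩, ⟨b, hb, rfl⟩, -, hax, -, -, hsub⟩ := hxy
  have hlv : lv (b • y) = lv (a • x) := by
    obtain hsub0 | hsub0 := eq_or_ne (b • y - a • x) 0
    · rw [sub_eq_zero.1 hsub0]
    · have hlt : lv (a • x) < lv (b • y - a • x) :=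
        (h.notMem_lattice.1 hax).2.trans_le ((sub_mem_comm_iff.1 hsub) hsub0)
      simpa using (h.add_of_lt (smul_ne_zero ha hx) hsub0 hlt).2
  calc lv x ≡ lv (a • x) [ZMOD n] := (h.smul_modEq ha hx).symm
    _ ≡ lv y [ZMOD n] := hlv ▸ h.smul_modEq hb hy

theorem exists_sub_smul_mem_lattice (h : IsChainLevel p n lv) (hu : u ≠ 0)
    (hv : v ∈ h.lattice (lv u)) : ∃ c ∈ zpRing p, v - c • u ∈ h.lattice (lv u + 1) := by
  by_cases hv' : v ∈ h.lattice (lv u + 1)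
  · exact ⟨0, zero_mem _, by simpa using hv'⟩
  obtain ⟨hv0, hlt⟩ := h.notMem_lattice.1 hv'
  have hvu : lv v = lv u := le_antisymm (Int.lt_add_one_iff.1 hlt) (hv hv0)
  obtain ⟨c, -, hval, hc⟩ := h.exists_lt_sub_smul v u hv0 hu hvu
  exact ⟨c, mem_zpRing_iff_padicValRat_nonneg.2 hval.ge, fun h0 => hvu ▸ hc h0⟩

theorem zpRelV_of_lv_add_one_eq (h : IsChainLevel p n lv) (hn : 0 < n) (hx : x ≠ 0) (hy : y ≠ 0)
    (hxm : lv x + 1 = m + n) (hxy : lv x = lv y) : ZpRelV p (h.lattice m) x y := by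
  obtain ⟨c, hc, hval, hlt⟩ := h.exists_lt_sub_smul x y hx hy hxy
  have hcy : lv (c • y) = lv x := by rw [h.smul c y hc hy, hval, mul_zero, zero_add, hxy]
  have hmem : ∀ v, lv v = lv x → v ≠ 0 → v ∈ h.lattice m ∧ v ∉ h.lattice (m + n) := by
    intro v hv hv0
    exact ⟨(h.mem_lattice_of_ne_zero hv0).2 (by omega), h.notMem_lattice.2 ⟨hv0, by omega⟩⟩
  obtain ⟨hxL, hxpL⟩ := hmem x rfl hx
  obtain ⟨hyL, hypL⟩ := hmem _ hcy (smul_ne_zero hc hy)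
  simp only [ZpRelV, pSMul_coe, prime_smul_lattice, SetLike.mem_coe]
  exact ⟨x, c • y, ⟨1, one_ne_zero, (one_smul ℚ x).symm⟩, ⟨c, hc, rfl⟩, hxL, hxpL, hyL, hypL,
    fun h0 => hxm ▸ hlt h0⟩

end IsChainLevel

end Chains

section ColouredChains

variable {p : ℕ} [Fact p.Prime] {V : Type v} [AddCommGroup V] [Module ℚ V] {A : Type w}
  {n : ℕ} {lv : V → ℤ} {u v : V} {m : ℤ}

/-- `F` colours the nonzero vectors by their level modulo the period `n`: the colour classes are
exactly the residue classes of the level. -/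
def IsLevelColouring (n : ℕ) (lv : V → ℤ) (F : V → A) : Prop :=
  ∀ u v, u ≠ 0 → v ≠ 0 → (F u = F v ↔ lv u ≡ lv v [ZMOD n])

namespace IsChainLevel

section ExistenceOfFlag

variable {f : Projectivization ℚ V → A}

theorem inducedOn_lattice (h : IsChainLevel p n lv) (hf : IsLevelColouring n lv (colour f))
    (W : Submodule ℚ V) (m : ℤ) : InducedOn f W p (h.lattice m) := fun x y hx hy _ _ hxy =>
  (colour_eq_iff hx hy).1 ((hf x y hx hy).2 (h.modEq_of_zpRelV hx hy hxy))

theorem resLineV_lattice (h : IsChainLevel p 3 lv) (hu : u ≠ 0) (hv : v ≠ 0)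
    (hum : lv u = m + 2) (hvm : lv v = m + 1) :
    resLineV p (h.lattice m) u v = h.lattice (m + 1) := by
  rw [resLineV_coe, h.prime_smul_lattice]
  congr 1
  apply le_antisymm
  · refine sup_le (Submodule.span_le.2 (Set.pair_subset ?_ ?_)) fun z hz hz0 => ?_
    · exact fun _ => by omega
    · exact fun _ => by omega
    · have := hz hz0
      omega
  · intro z hz
    rw [← hvm] at hz
    obtain ⟨a, ha, hza⟩ := h.exists_sub_smul_mem_lattice hv hz
    rw [show lv v + 1 = lv u by omega] at hza
    obtain ⟨b, hb, hzb⟩ := h.exists_sub_smul_mem_lattice hu hza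
    rw [show lv u + 1 = m + (3 : ℕ) by rw [hum]; norm_num; ring] at hzb
    have hz : z = (b • u + a • v) + (z - a • v - b • u) := by abel
    rw [hz]
    exact Submodule.add_mem_sup (Submodule.mem_span_pair.2 ⟨⟨b, hb⟩, ⟨a, ha⟩, rfl⟩) hzb

theorem modEq_of_smul_mem_lattice (h : IsChainLevel p n lv) (hv : v ≠ 0) {c : ℚ} (hc : c ≠ 0)
    (hmem : c • v ∈ h.lattice m) (hnot : c • v ∉ h.lattice (m + 1)) : lv v ≡ m [ZMOD n] := by
  obtain ⟨hcv, hlt⟩ := h.notMem_lattice.1 hnot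
  rw [← le_antisymm (Int.lt_add_one_iff.1 hlt) (hmem hcv)]
  exact (h.smul_modEq hc hv).symm

theorem smul_notMem_lattice_of_not_zpRelV (h : IsChainLevel p n lv) (hn : 0 < n) (hu : u ≠ 0)
    (hum : lv u + 1 = m + n) {c : ℚ} (hc : c ≠ 0) (hnot : c • v ∉ h.lattice (m + n))
    (hrel : ¬ ZpRelV p (h.lattice m) v u) : c • v ∉ h.lattice (lv u) := by
  intro hmem
  obtain ⟨hcv, hlt⟩ := h.notMem_lattice.1 hnot
  have hlv : lv (c • v) = lv u := le_antisymm (by omega) (hmem hcv)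
  obtain ⟨_, y', ⟨b, hb, rfl⟩, hy', hmems⟩ :=
    h.zpRelV_of_lv_add_one_eq (m := m) hn hcv hu (by omega) hlv
  exact hrel ⟨_, y', ⟨b * c, mul_ne_zero hb hc, smul_smul b c v⟩, hy', hmems⟩

theorem resFlagPlane_lattice (h : IsChainLevel p 3 lv) (hf : IsLevelColouring 3 lv (colour f))
    (m : ℤ) : ResFlagPlane f p (h.lattice m) := by
  obtain ⟨q, hq, hqm⟩ := h.exists_eq (m + 2)
  obtain ⟨w, hw, hwm⟩ := h.exists_eq (m + 1)
  have heq : ∀ {k : ℤ} {x y : V} (hx : x ≠ 0) (hy : y ≠ 0), lv x ≡ k [ZMOD (3 : ℕ)] →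
      lv y ≡ k [ZMOD (3 : ℕ)] →
      f (Projectivization.mk ℚ x hx) = f (Projectivization.mk ℚ y hy) := fun hx hy hxk hyk =>
    (colour_eq_iff hx hy).1 ((hf _ _ hx hy).2 (hxk.trans hyk.symm))
  have hmem : ∀ v, v ≠ 0 → m ≤ lv v → lv v < m + (3 : ℕ) →
      v ∈ (h.lattice m : Set V) \ h.lattice (m + (3 : ℕ)) := fun v hv hle hlt =>
    ⟨(h.mem_lattice_of_ne_zero hv).2 hle, h.notMem_lattice.2 ⟨hv, hlt⟩⟩
  have hline : ∀ x, x ≠ 0 → (∃ a : ℚ, a ≠ 0 ∧ a • x ∈ (h.lattice (m + 1) : Set V) \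
      h.lattice (m + (3 : ℕ))) → ¬ ZpRelV p (h.lattice m) x q →
      lv x ≡ m + 1 [ZMOD (3 : ℕ)] := by
    rintro x hx ⟨a, ha, hxm, hxm'⟩ hrel
    refine h.modEq_of_smul_mem_lattice hx ha hxm ?_
    rw [show m + 1 + 1 = lv q by omega]
    exact h.smul_notMem_lattice_of_not_zpRelV three_pos hq (by omega) ha hxm' hrel
  refine ⟨q, w, ?_⟩
  rw [h.resLineV_lattice hq hw hqm hwm, pSMul_coe, h.prime_smul_lattice]
  refine ⟨hmem q hq (by omega) (by omega), hmem w hw (by omega) (by omega), fun hqw => ?_, ?_,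
    fun x y hx hy hx' hxq hy' hyq => heq hx hy (hline x hx hx' hxq) (hline y hy hy' hyq)⟩
  · have := (h.modEq_of_zpRelV hq hw hqw).dvd
    omega
  · rintro x y hx hy ⟨a, ha, ⟨hxm, -⟩, hxm'⟩ ⟨b, hb, ⟨hym, -⟩, hym'⟩
    exact heq hx hy (h.modEq_of_smul_mem_lattice hx ha hxm hxm')
      (h.modEq_of_smul_mem_lattice hy hb hym hym')

end ExistenceOfFlag

section UniquenessOfFlag

variable {F : V → A} {C : Fin (n + 1) → Submodule (zpRing p) V}

theorem lv_lt_of_splitAt_zero (h : IsChainLevel p n lv) (hF : IsLevelColouring n lv F)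
    (hu : u ≠ 0) (hv : v ≠ 0) (huv : F u ≠ F v) (hs : SplitAt p F u v 0) :
    lv u < lv v ∧ lv v < lv u + n := by
  have hp : (p : ℚ)⁻¹ ≠ 0 := inv_ne_zero (NeZero.ne _)
  have hval : padicValRat p (p : ℚ)⁻¹ = -1 := by
    rw [padicValRat.inv, padicValRat.self (Fact.out : p.Prime).one_lt]
  have hpv := smul_ne_zero hp hv
  have hlvp := h.smul _ v hp hv
  rw [hval] at hlvp
  have hFp : F ((p : ℚ)⁻¹ • v) = F v := (hF _ _ hpv hv).2 (h.smul_modEq hp hv)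
  have hsum : F (u + v) = F u := by simpa using hs 1 one_ne_zero
  have hsum' : F (u + (p : ℚ)⁻¹ • v) = F v := by simpa [hval] using hs _ hp
  constructor
  · by_contra! hle
    obtain heq | hlt := hle.eq_or_lt
    · exact huv ((hF u v hu hv).2 (by rw [heq]))
    · obtain ⟨hne, hadd⟩ := h.add_of_lt hv hu hlt
      rw [add_comm] at hne hadd
      exact huv (hsum.symm.trans ((hF _ _ hne hv).2 (by rw [hadd])))
  · by_contra! hle
    obtain heq | hlt : lv u = lv ((p : ℚ)⁻¹ • v) ∨ lv u < lv ((p : ℚ)⁻¹ • v) := by omega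
    · exact huv (((hF u _ hu hpv).2 (by rw [heq])).trans hFp)
    · obtain ⟨hne, hadd⟩ := h.add_of_lt hu hpv hlt
      exact huv (((hF _ _ hne hu).2 (by rw [hadd])).symm.trans hsum')

theorem exists_mem_strata (h : IsChainLevel p n lv) (hF : IsLevelColouring n lv F)
    (hC : IsResidueFlag F C) (hfg : (C 0).FG) (hspan : Submodule.span ℚ (C 0 : Set V) = ⊤) :
    ∃ g : Fin n → V, (∀ i, g i ∈ C i.castSucc ∧ g i ∉ C i.succ) ∧
      Function.Injective fun i => F (g i) := by
  have hex : ∀ i : Fin n, ∃ (j : Fin n) (v : V), v ≠ 0 ∧ lv v ≡ i [ZMOD n] ∧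
      v ∈ C j.castSucc ∧ v ∉ C j.succ := by
    intro i
    obtain ⟨v, hv, hvi⟩ := h.exists_eq i
    obtain ⟨c, hc, hcv, hcvp⟩ :=
      exists_smul_mem_notMem_smul hfg (hspan ▸ Submodule.mem_top : v ∈ _) hv
    obtain ⟨j, hj⟩ := hC.exists_stratum hcv hcvp
    exact ⟨j, c • v, smul_ne_zero hc hv, hvi ▸ h.smul_modEq hc hv, hj⟩
  choose σ v hv0 hv hσ using hex
  have hFv : ∀ i j, F (v i) = F (v j) → i = j := fun i j hij => by
    have hmod := ((hv i).symm.trans (((hF _ _ (hv0 i) (hv0 j)).1 hij).trans (hv j)))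
    exact Fin.ext (Nat.ModEq.eq_of_lt_of_lt (Int.natCast_modEq_iff.1 hmod) i.2 j.2)
  have hσinj : Function.Injective σ := fun i j hij =>
    hFv i j (hC.apply_eq _ _ _ (hσ i).1 (hσ i).2 (hij ▸ (hσ j).1) (hij ▸ (hσ j).2))
  obtain ⟨τ, hτ⟩ := (Finite.surjective_of_injective hσinj).hasRightInverse
  refine ⟨fun i => v (τ i), fun i => ?_, fun i j hij => hτ.injective (hFv _ _ hij)⟩
  have := hσ (τ i)
  rwa [hτ i] at this

theorem lv_lt_of_mem_strata (h : IsChainLevel p n lv) (hF : IsLevelColouring n lv F)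
    (hC : IsResidueFlag F C) {i j : Fin n} (hij : i < j) (huv : F u ≠ F v)
    (hu : u ∈ C i.castSucc) (hu' : u ∉ C i.succ) (hv : v ∈ C j.castSucc) (hv' : v ∉ C j.succ) :
    lv u < lv v ∧ lv v < lv u + n := by
  have hne : ∀ {k : Fin n} {x}, x ∉ C k.succ → x ≠ 0 := fun {k _} hx =>
    (ne_of_mem_of_not_mem (C k.succ).zero_mem hx).symm
  refine h.lv_lt_of_splitAt_zero hF (hne hu') (hne hv') huv
    (hC.splitAt (fun c hc x => ?_) hij hu hu' hv hv')
  obtain rfl | hx := eq_or_ne x 0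
  · rw [smul_zero]
  · exact (hF _ _ (smul_ne_zero hc hx) hx).2 (h.smul_modEq hc hx)

theorem exists_lv_mem_Ico_of_isResidueFlag (h : IsChainLevel p n lv) (hn : 2 ≤ n)
    (hF : IsLevelColouring n lv F) (hC : IsResidueFlag F C)
    (hfg : (C 0).FG) (hspan : Submodule.span ℚ (C 0 : Set V) = ⊤) :
    ∃ m : ℤ, ∀ u ∈ C 0, u ∉ (p : ℚ) • C 0 → lv u ∈ Set.Ico m (m + n) := by
  obtain ⟨g, hg, hFg⟩ := h.exists_mem_strata hF hC hfg hspan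
  have hlt : ∀ {i j : Fin n} {u v}, i < j → u ∈ C i.castSucc → u ∉ C i.succ → v ∈ C j.castSucc →
      v ∉ C j.succ → lv u < lv v ∧ lv v < lv u + n := by
    intro i j u v hij hu hu' hv hv'
    refine h.lv_lt_of_mem_strata hF hC hij ?_ hu hu' hv hv'
    rw [hC.apply_eq i u (g i) hu hu' (hg i).1 (hg i).2,
      hC.apply_eq j v (g j) hv hv' (hg j).1 (hg j).2]
    exact fun heq => hij.ne (hFg heq)
  let zero : Fin n := ⟨0, by omega⟩
  let one : Fin n := ⟨1, by omega⟩
  refine ⟨lv (g zero), fun u hu hup => ?_⟩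
  obtain ⟨j, hj, hj'⟩ := hC.exists_stratum hu hup
  obtain rfl | hj0 : j = zero ∨ zero < j := by
    simp only [zero, Fin.ext_iff, Fin.lt_def]
    omega
  · have h01 : zero < one := Nat.zero_lt_one
    have hu1 := hlt h01 hj hj' (hg one).1 (hg one).2
    have hg1 := hlt h01 (hg zero).1 (hg zero).2 (hg one).1 (hg one).2
    have hne : ∀ {x}, x ∉ C zero.succ → x ≠ 0 := fun hx =>
      (ne_of_mem_of_not_mem (C zero.succ).zero_mem hx).symm
    have hmod := (hF _ _ (hne (hg zero).2) (hne hj')).1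
      (hC.apply_eq zero _ _ (hg zero).1 (hg zero).2 hj hj')
    have heq : lv u - lv (g zero) = 0 :=
      Int.eq_zero_of_abs_lt_dvd hmod.dvd (abs_lt.2 ⟨by omega, by omega⟩)
    exact ⟨by omega, by omega⟩
  · have := hlt hj0 (hg zero).1 (hg zero).2 hj hj'
    exact ⟨this.1.le, this.2⟩

theorem exists_eq_lattice_of_isResidueFlag (h : IsChainLevel p n lv) (hn : 2 ≤ n)
    (hF : IsLevelColouring n lv F) (hC : IsResidueFlag F C)
    (hfg : (C 0).FG) (hspan : Submodule.span ℚ (C 0 : Set V) = ⊤) : ∃ m, C 0 = h.lattice m := by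
  obtain ⟨m, hm⟩ := h.exists_lv_mem_Ico_of_isResidueFlag hn hF hC hfg hspan
  refine ⟨m, Submodule.ext fun v => ?_⟩
  obtain rfl | hv := eq_or_ne v 0
  · simp only [zero_mem]
  obtain ⟨c, hc, hcv, hcvp⟩ :=
    exists_smul_mem_notMem_smul hfg (hspan ▸ Submodule.mem_top : v ∈ _) hv
  obtain ⟨hle, hlt⟩ := hm _ hcv hcvp
  have hv_mem : v ∈ C 0 ↔ padicValRat p c ≤ 0 := by
    refine ⟨fun hvC => padicValRat_nonpos_of_smul_notMem_smul hvC hcvp, fun hval => ?_⟩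
    rw [← inv_smul_smul₀ hc v]
    exact smul_mem_of_padicValRat_nonneg (by rw [padicValRat.inv]; omega) hcv
  rw [hv_mem, h.mem_lattice_of_ne_zero hv]
  rw [h.smul c v hc hv] at hle hlt
  constructor
  · intro hval
    nlinarith
  · intro hmv
    by_contra! hval
    nlinarith

end UniquenessOfFlag

end IsChainLevel

end ColouredChains

section WeightedBases

variable {p : ℕ} {ι : Type*} [Fintype ι] {V : Type v} [AddCommGroup V] [Module ℚ V]
  {b : Module.Basis ι ℚ V} {wt : ι → ℤ} {v : V} {i j : ι} {m : ℤ}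

/-- The level function obtained by giving `p` the weight `n`, the dimension, and the basis vector
`b i` the weight `wt i`: the level of `v` is the least weight of a nonzero term `v i • b i`.
At `v = 0` it has the junk value `sInf ∅ = 0`. -/
noncomputable def basisLevel (p : ℕ) (b : Module.Basis ι ℚ V) (wt : ι → ℤ) (v : V) : ℤ :=
  sInf ((fun i => Fintype.card ι * padicValRat p (b.repr v i) + wt i) '' {i | b.repr v i ≠ 0})

theorem exists_basisLevel_eq (hv : v ≠ 0) : ∃ i, b.repr v i ≠ 0 ∧
    basisLevel p b wt v = Fintype.card ι * padicValRat p (b.repr v i) + wt i := by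
  have hne : {i | b.repr v i ≠ 0}.Nonempty := by
    by_contra! hempty
    refine hv (b.ext_elem fun i => ?_)
    simpa using Set.eq_empty_iff_forall_notMem.1 hempty i
  obtain ⟨i, hi, heq⟩ := (hne.image fun i =>
    (Fintype.card ι * padicValRat p (b.repr v i) + wt i : ℤ)).csInf_mem (Set.toFinite _)
  exact ⟨i, hi, heq.symm⟩

theorem basisLevel_le (hi : b.repr v i ≠ 0) :
    basisLevel p b wt v ≤ Fintype.card ι * padicValRat p (b.repr v i) + wt i :=
  csInf_le (Set.toFinite _).bddBelow (Set.mem_image_of_mem _ hi)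

theorem le_basisLevel_iff (hv : v ≠ 0) : m ≤ basisLevel p b wt v ↔
    ∀ i, b.repr v i ≠ 0 → m ≤ Fintype.card ι * padicValRat p (b.repr v i) + wt i := by
  refine ⟨fun hm i hi => hm.trans (basisLevel_le hi), fun hm => ?_⟩
  obtain ⟨i, hi, heq⟩ := exists_basisLevel_eq (p := p) (b := b) (wt := wt) hv
  exact heq ▸ hm i hi

theorem basisLevel_smul_basis {c : ℚ} (hc : c ≠ 0) (i : ι) :
    basisLevel p b wt (c • b i) = Fintype.card ι * padicValRat p c + wt i := by
  obtain ⟨j, hj, heq⟩ :=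
    exists_basisLevel_eq (p := p) (b := b) (wt := wt) (smul_ne_zero hc (b.ne_zero i))
  obtain rfl : i = j := by
    by_contra hij
    simp [Finsupp.single_eq_of_ne' hij] at hj
  simpa using heq

theorem eq_of_level_modEq (hwt : ∀ i j, wt i ≡ wt j [ZMOD Fintype.card ι] → i = j) {k l : ℤ}
    (h : Fintype.card ι * k + wt i ≡ Fintype.card ι * l + wt j [ZMOD Fintype.card ι]) : i = j := by
  refine hwt i j ?_
  simpa [Int.ModEq] using h

theorem basisLevel_lt_of_ne (hwt : ∀ i j, wt i ≡ wt j [ZMOD Fintype.card ι] → i = j)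
    (hi : basisLevel p b wt v = Fintype.card ι * padicValRat p (b.repr v i) + wt i)
    (hj : b.repr v j ≠ 0) (hji : j ≠ i) :
    basisLevel p b wt v < Fintype.card ι * padicValRat p (b.repr v j) + wt j :=
  (basisLevel_le hj).lt_of_ne fun heq =>
    hji (eq_of_level_modEq hwt (congrArg (· % (Fintype.card ι : ℤ)) (heq.symm.trans hi)))

variable [Fact p.Prime]

theorem basisLevel_smul {c : ℚ} (hc : c ≠ 0) (hv : v ≠ 0) :
    basisLevel p b wt (c • v) = Fintype.card ι * padicValRat p c + basisLevel p b wt v := by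
  refine eq_of_forall_le_iff fun m => ?_
  rw [← sub_le_iff_le_add', le_basisLevel_iff (smul_ne_zero hc hv), le_basisLevel_iff hv]
  refine forall_congr' fun i => ?_
  rw [map_smul, Finsupp.smul_apply, smul_eq_mul, mul_ne_zero_iff_left hc]
  refine forall_congr' fun hi => ?_
  rw [padicValRat.mul hc hi, mul_add, add_assoc, sub_le_iff_le_add']

theorem min_basisLevel_le_add {u : V} (huv : u + v ≠ 0) :
    min (basisLevel p b wt u) (basisLevel p b wt v) ≤ basisLevel p b wt (u + v) := by
  refine (le_basisLevel_iff huv).2 fun i hi => ?_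
  rw [map_add, Finsupp.add_apply] at hi ⊢
  by_cases hui : b.repr u i = 0
  · rw [hui, zero_add] at hi ⊢
    exact (min_le_right _ _).trans (basisLevel_le hi)
  by_cases hvi : b.repr v i = 0
  · rw [hvi, add_zero] at hi ⊢
    exact (min_le_left _ _).trans (basisLevel_le hui)
  have hlu := basisLevel_le (p := p) (wt := wt) hui
  have hlv := basisLevel_le (p := p) (wt := wt) hvi
  rcases min_le_iff.1 (padicValRat.min_le_padicValRat_add (p := p) hi) with hval | hval
  · refine (min_le_left _ _).trans (hlu.trans ?_)
    gcongr
  · refine (min_le_right _ _).trans (hlv.trans ?_)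
    gcongr

theorem exists_basisLevel_lt_sub_smul
    (hwt : ∀ i j, wt i ≡ wt j [ZMOD Fintype.card ι] → i = j) {u : V} (hu : u ≠ 0) (hv : v ≠ 0)
    (huv : basisLevel p b wt u = basisLevel p b wt v) :
    ∃ c : ℚ, c ≠ 0 ∧ padicValRat p c = 0 ∧
      (u - c • v ≠ 0 → basisLevel p b wt u < basisLevel p b wt (u - c • v)) := by
  obtain ⟨i, hui, hlu⟩ := exists_basisLevel_eq (p := p) (b := b) (wt := wt) hu
  obtain ⟨j, hvi, hlv⟩ := exists_basisLevel_eq (p := p) (b := b) (wt := wt) hv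
  obtain rfl : i = j := eq_of_level_modEq hwt
    (congrArg (· % (Fintype.card ι : ℤ)) (hlu.symm.trans (huv.trans hlv)))
  have hcard : (Fintype.card ι : ℤ) ≠ 0 := by exact_mod_cast (Fintype.card_pos_iff.2 ⟨i⟩).ne'
  set c := b.repr u i / b.repr v i with hc
  have hc0 : c ≠ 0 := div_ne_zero hui hvi
  have hval : padicValRat p c = 0 := by
    rw [hc, padicValRat.div hui hvi, sub_eq_zero]
    exact mul_left_cancel₀ hcard (by linarith)
  refine ⟨c, hc0, hval, fun hne => ?_⟩
  have hlv_neg : basisLevel p b wt (-(c • v)) = basisLevel p b wt u := by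
    rw [← neg_smul, basisLevel_smul (neg_ne_zero.2 hc0) hv, padicValRat.neg, hval, mul_zero,
      zero_add, huv]
  have hle := min_basisLevel_le_add (p := p) (b := b) (wt := wt) (u := u) (v := -(c • v))
    (by rwa [← sub_eq_add_neg])
  rw [hlv_neg, min_self, ← sub_eq_add_neg] at hle
  refine hle.lt_of_ne fun heq => ?_
  obtain ⟨k, hk, hlk⟩ := exists_basisLevel_eq (p := p) (b := b) (wt := wt) hne
  obtain rfl : k = i := eq_of_level_modEq hwt
    (congrArg (· % (Fintype.card ι : ℤ)) (hlk.symm.trans (heq.symm.trans hlu)))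
  exact hk (by simp [hc, hvi])

theorem isChainLevel_basisLevel [Nonempty ι] (b : Module.Basis ι ℚ V)
    (hwt : ∀ i j, wt i ≡ wt j [ZMOD Fintype.card ι] → i = j) :
    IsChainLevel p (Fintype.card ι) (basisLevel p b wt) where
  smul _ _ hc hv := basisLevel_smul hc hv
  min_le_add _ _ _ _ huv := min_basisLevel_le_add huv
  exists_eq m := by
    have hinj : Function.Injective fun i => (wt i : ZMod (Fintype.card ι)) := fun i j hij =>
      hwt i j ((ZMod.intCast_eq_intCast_iff _ _ _).1 hij)
    obtain ⟨i, hi⟩ := ((Fintype.bijective_iff_injective_and_card _).2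
      ⟨hinj, (ZMod.card _).symm⟩).surjective m
    obtain ⟨k, rfl⟩ := Int.modEq_iff_add_fac.1 ((ZMod.intCast_eq_intCast_iff _ _ _).1 hi)
    have hp : (p : ℚ) ^ k ≠ 0 := zpow_ne_zero _ (NeZero.ne _)
    refine ⟨_, smul_ne_zero hp (b.ne_zero i), ?_⟩
    rw [basisLevel_smul_basis hp, padicValRat_zpow_self, add_comm]
  exists_lt_sub_smul _ _ hu hv huv := exists_basisLevel_lt_sub_smul hwt hu hv huv

theorem fg_lattice_basisLevel (h : IsChainLevel p (Fintype.card ι) (basisLevel p b wt)) (m : ℤ) :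
    (h.lattice m).FG := by
  let k : ι → ℤ := fun i => -((wt i - m) / Fintype.card ι)
  have hk : ∀ i (l : ℤ), k i ≤ l ↔ m ≤ Fintype.card ι * l + wt i := fun i l => by
    have hcard : (0 : ℤ) < Fintype.card ι := by exact_mod_cast Fintype.card_pos_iff.2 ⟨i⟩
    rw [neg_le, Int.le_ediv_iff_mul_le hcard]
    constructor <;> intro <;> linarith
  have hp : ∀ i, (p : ℚ) ^ k i ≠ 0 := fun i => zpow_ne_zero _ (NeZero.ne _)
  refine Submodule.fg_def.2 ⟨_, Set.finite_range fun i => (p : ℚ) ^ k i • b i,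
    le_antisymm (Submodule.span_le.2 ?_) fun v hv => ?_⟩
  · rintro _ ⟨i, rfl⟩ -
    rw [basisLevel_smul_basis (hp i), padicValRat_zpow_self]
    exact (hk i _).1 le_rfl
  · rw [← b.sum_repr v]
    refine sum_mem fun i _ => ?_
    by_cases hvi : b.repr v i = 0
    · rw [hvi, zero_smul]
      exact zero_mem _
    have hv0 : v ≠ 0 := fun h0 => hvi (by simp [h0])
    have hterm : b.repr v i • b i = (((p : ℚ) ^ k i)⁻¹ * b.repr v i) • (p : ℚ) ^ k i • b i := by
      rw [smul_smul, mul_right_comm, inv_mul_cancel₀ (hp i), one_mul]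
    rw [hterm]
    refine smul_mem_of_padicValRat_nonneg ?_ (Submodule.subset_span ⟨i, rfl⟩)
    rw [padicValRat.mul (inv_ne_zero (hp i)) hvi, padicValRat.inv, padicValRat_zpow_self]
    have := (hk i _).2 ((hv hv0).trans (basisLevel_le hvi))
    omega

end WeightedBases

section AdaptedWeights

variable {p : ℕ} {V : Type v} [AddCommGroup V] [Module ℚ V] {A : Type w} {F : V → A}

/-- The weights `wt` are compatible with the thresholds of `F` on the pairs of vectors of `e`: if
`e i` has weight `wt i` and `p` has as weight the number of vectors, then `e i` and `c • e j` never
have the same weight, and `e i + c • e j` has the colour of the summand of smaller weight. -/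
def IsAdaptedWeight (p : ℕ) (F : V → A) {ι : Type*} [Fintype ι] (e : ι → V) (wt : ι → ℤ) : Prop :=
  ∀ i j, i ≠ j → ∃ t : ℤ, SplitAt p F (e i) (e j) t ∧
    wt i - wt j ∈ Set.Ioo (Fintype.card ι * (t - 1)) (Fintype.card ι * t)

theorem IsAdaptedWeight.eq_of_modEq {ι : Type*} [Fintype ι] {e : ι → V} {wt : ι → ℤ}
    (hwt : IsAdaptedWeight p F e wt) (i j : ι) (hij : wt i ≡ wt j [ZMOD Fintype.card ι]) :
    i = j := by
  by_contra hne
  obtain ⟨t, -, hlt, hgt⟩ := hwt i j hne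
  obtain ⟨k, hk⟩ := hij.symm.dvd
  rw [hk] at hlt hgt
  have hcard : (0 : ℤ) ≤ Fintype.card ι := Int.natCast_nonneg _
  have := lt_of_mul_lt_mul_left hlt hcard
  have := lt_of_mul_lt_mul_left hgt hcard
  omega

theorem IsSplitColouring.apply_eq_of_basisLevel_eq [Fact p.Prime] (hF : IsSplitColouring p F)
    {ι : Type*} [Fintype ι] {b : Module.Basis ι ℚ V} {wt : ι → ℤ}
    (hb : Function.Injective fun i => F (b i)) (hwt : IsAdaptedWeight p F b wt) {v : V} {i : ι}
    (hvi : b.repr v i ≠ 0)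
    (hi : basisLevel p b wt v = Fintype.card ι * padicValRat p (b.repr v i) + wt i) :
    F v = F (b i) := by
  classical
  let s := Finset.univ.filter fun j => b.repr v j ≠ 0
  have hs : ∀ j ∈ s, b.repr v j ≠ 0 := fun j hj => (Finset.mem_filter.1 hj).2
  have hsum : ∑ j ∈ s, b.repr v j • b j = v :=
    (Finset.sum_filter_of_ne fun _ _ => left_ne_zero_of_smul).trans (b.sum_repr v)
  have hdom : ∀ j ∈ s, j ≠ i →
      F (b.repr v i • b i + b.repr v j • b j) = F (b.repr v i • b i) := by
    intro j hj hji
    obtain ⟨t, ht, hwt_lt, -⟩ := hwt i j hji.symm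
    have hlt := basisLevel_lt_of_ne hwt.eq_of_modEq hi (hs j hj) hji
    have hval : t - 1 < padicValRat p (b.repr v j) - padicValRat p (b.repr v i) :=
      lt_of_mul_lt_mul_left (a := (Fintype.card ι : ℤ)) (by linarith) (Int.natCast_nonneg _)
    have := ht.smul hF.smul hvi (hs j hj) 1 one_ne_zero
    rwa [one_smul, padicValRat.one, if_pos (by omega)] at this
  have := hF.apply_sum_eq_of_dominant (v := fun j => b.repr v j • b j)
    (Finset.mem_filter.2 ⟨Finset.mem_univ i, hvi⟩) (hF.injOn_smul hb hs) hdom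
  rwa [hsum, hF.smul _ hvi] at this

theorem IsSplitColouring.isLevelColouring_basisLevel [Fact p.Prime] (hF : IsSplitColouring p F)
    {ι : Type*} [Fintype ι] {b : Module.Basis ι ℚ V} {wt : ι → ℤ}
    (hb : Function.Injective fun i => F (b i)) (hwt : IsAdaptedWeight p F b wt) :
    IsLevelColouring (Fintype.card ι) (basisLevel p b wt) F := by
  intro u v hu hv
  obtain ⟨i, hui, hlu⟩ := exists_basisLevel_eq (p := p) (b := b) (wt := wt) hu
  obtain ⟨j, hvj, hlv⟩ := exists_basisLevel_eq (p := p) (b := b) (wt := wt) hv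
  rw [hF.apply_eq_of_basisLevel_eq hb hwt hui hlu, hF.apply_eq_of_basisLevel_eq hb hwt hvj hlv,
    hlu, hlv]
  refine ⟨fun hij => ?_, fun hmod => by rw [eq_of_level_modEq hwt.eq_of_modEq hmod]⟩
  obtain rfl := hb hij
  simp [Int.ModEq]

theorem IsSplitColouring.exists_isAdaptedWeight [Fact p.Prime] (hF : IsSplitColouring p F)
    {e : Fin 3 → V} (he : Function.Injective fun i => F (e i)) (he0 : ∀ i, e i ≠ 0) :
    ∃ wt, IsAdaptedWeight p F e wt := by
  have hne : ∀ {i j}, i ≠ j → F (e i) ≠ F (e j) := fun hij h => hij (he h)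
  have hsplit : ∀ i j, i ≠ j → ∃ t, SplitAt p F (e i) (e j) t := fun i j hij =>
    hF.exists_splitAt _ _ (he0 i) (he0 j) (hne hij)
  obtain ⟨r, hr⟩ := hsplit 0 1 (by decide)
  obtain ⟨s, hs⟩ := hsplit 1 2 (by decide)
  obtain ⟨t, ht⟩ := hsplit 0 2 (by decide)
  have hle := hF.threshold_le_add (hne (by decide)) (hne (by decide)) (hne (by decide)) hr hs ht
  have hge := hF.add_le_threshold_add_one (hne (by decide)) (hne (by decide)) (hne (by decide))
    hr hs ht
  obtain ⟨x, y, hxy⟩ : ∃ x y : ℤ, x = 1 ∧ y = 2 ∧ t = r + s ∨ x = 2 ∧ y = 1 ∧ t = r + s - 1 := by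
    obtain h | h : t = r + s ∨ t = r + s - 1 := by omega
    exacts [⟨1, 2, .inl ⟨rfl, rfl, h⟩⟩, ⟨2, 1, .inr ⟨rfl, rfl, h⟩⟩]
  obtain ⟨wt, h0, h1, h2⟩ : ∃ wt : Fin 3 → ℤ, wt 0 = 0 ∧ wt 1 = x - 3 * r ∧ wt 2 = y - 3 * t :=
    ⟨![0, x - 3 * r, y - 3 * t], rfl, rfl, rfl⟩
  have hlt : ∀ i j, i < j → ∃ t : ℤ, SplitAt p F (e i) (e j) t ∧
      wt i - wt j ∈ Set.Ioo (3 * (t - 1)) (3 * t) := by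
    intro i j hij
    have hcases : ∀ i j : Fin 3, i < j → i = 0 ∧ j = 1 ∨ i = 1 ∧ j = 2 ∨ i = 0 ∧ j = 2 := by decide
    obtain ⟨rfl, rfl⟩ | ⟨rfl, rfl⟩ | ⟨rfl, rfl⟩ := hcases i j hij
    exacts [⟨r, hr, by omega, by omega⟩, ⟨s, hs, by omega, by omega⟩, ⟨t, ht, by omega, by omega⟩]
  refine ⟨wt, fun i j hij => ?_⟩
  rw [Fintype.card_fin]
  obtain hij | hij := hij.lt_or_gt
  · exact hlt i j hij
  · obtain ⟨t, ht, hgt, hlt⟩ := hlt j i hij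
    exact ⟨1 - t, ht.symm hF.smul, by push_cast; linarith, by push_cast; linarith⟩

theorem IsSplitColouring.exists_isLevelColouring [Fact p.Prime] (hF : IsSplitColouring p F)
    (hV : Module.finrank ℚ V = 3) {e : Fin 3 → V} (he : Function.Injective fun i => F (e i))
    (he0 : ∀ i, e i ≠ 0) : ∃ (lv : V → ℤ) (h : IsChainLevel p 3 lv), IsLevelColouring 3 lv F ∧
      ∀ m, (h.lattice m).FG := by
  let b := basisOfLinearIndependentOfCardEqFinrank (hF.linearIndependent he he0) (by simp [hV])
  have hb : ⇑b = e := coe_basisOfLinearIndependentOfCardEqFinrank _ _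
  rw [← hb] at he he0
  obtain ⟨wt, hwt⟩ := hF.exists_isAdaptedWeight he he0
  have h : IsChainLevel p 3 (basisLevel p b wt) := isChainLevel_basisLevel b hwt.eq_of_modEq
  exact ⟨_, h, hF.isLevelColouring_basisLevel he hwt, fg_lattice_basisLevel h⟩

end AdaptedWeights

theorem stmt10_general {p : ℕ} (hp : p.Prime) {V : Type v} [AddCommGroup V] [Module ℚ V]
    (hV : Module.finrank ℚ V = 3) {A : Type w} {f : Projectivization ℚ V → A}
    (h3 : 3 ≤ (Set.range f).encard)
    (hlines : ∀ W : Submodule ℚ V, Module.finrank ℚ W = 2 →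
      ∃ B : Set V, IsZpLatIn p W B ∧ InducedOn f W p B ∧ ∃ q : V, q ∈ B \ pSMul p B ∧
        ∀ x y : V, ∀ (hx : x ≠ 0) (hy : y ≠ 0), x ∈ W → y ∈ W →
          ¬ ZpRelV p B x q → ¬ ZpRelV p B y q →
          f (Projectivization.mk ℚ x hx) = f (Projectivization.mk ℚ y hy)) :
    ∃ B₁ B₂ B₃ : Set V,
      (IsZpLatIn p ⊤ B₁ ∧ InducedOn f ⊤ p B₁ ∧ ResFlagPlane f p B₁) ∧
      (IsZpLatIn p ⊤ B₂ ∧ InducedOn f ⊤ p B₂ ∧ ResFlagPlane f p B₂) ∧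
      (IsZpLatIn p ⊤ B₃ ∧ InducedOn f ⊤ p B₃ ∧ ResFlagPlane f p B₃) ∧
      ¬ LatEq B₁ B₂ ∧ ¬ LatEq B₁ B₃ ∧ ¬ LatEq B₂ B₃ ∧
      ∀ B' : Set V, IsZpLatIn p ⊤ B' → InducedOn f ⊤ p B' → ResFlagPlane f p B' →
        LatEq B' B₁ ∨ LatEq B' B₂ ∨ LatEq B' B₃ := by
  have := Fact.mk hp
  obtain ⟨e, he, he0⟩ := exists_injective_colour_of_le_encard h3
  obtain ⟨lv, h, hcol, hfg⟩ :=
    (isSplitColouring_colour hlines).exists_isLevelColouring hV he he0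
  have hL : ∀ m, IsZpLatIn p ⊤ (h.lattice m : Set V) ∧ InducedOn f ⊤ p (h.lattice m : Set V) ∧
      ResFlagPlane f p (h.lattice m) := fun m =>
    ⟨isZpLatIn_iff.2 ⟨_, hfg m, h.span_lattice three_pos m, rfl⟩, h.inducedOn_lattice hcol ⊤ m,
      h.resFlagPlane_lattice hcol m⟩
  refine ⟨h.lattice 0, h.lattice 1, h.lattice 2, hL 0, hL 1, hL 2, ?_⟩
  simp only [h.latEq_lattice_iff]
  refine ⟨by decide, by decide, by decide, fun B' hB' hind hplane => ?_⟩
  obtain ⟨L, hLfg, hspan, rfl⟩ := isZpLatIn_iff.1 hB'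
  rw [← hspan] at hind
  obtain ⟨C, rfl, hC⟩ := hplane.exists_isResidueFlag hind
  obtain ⟨m, hm⟩ := h.exists_eq_lattice_of_isResidueFlag (by norm_num) hcol hC hLfg hspan
  simp only [hm, h.latEq_lattice_iff, Int.ModEq]
  omega

/-- Lemma 3.5: let `f : ℙ(ℚ³) → A` take exactly three
values, at most two on every line, with the restriction to every line induced
via a `ℤ_(p)`-lattice from a flag map on the residue line.  Then there are
exactly three equivalence classes of `ℤ_(p)`-lattices `B ⊆ ℚ³` such that `f`
is induced via `B` from a flag map on `ℙ(B/pB)`. -/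
theorem stmt10 (p : ℕ) (hp : p.Prime) (A : Type w)
    (f : Projectivization ℚ (Fin 3 → ℚ) → A)
    (h3 : ∃ a₁ a₂ a₃ : A, a₁ ≠ a₂ ∧ a₁ ≠ a₃ ∧ a₂ ≠ a₃ ∧
      Set.range f = {a₁, a₂, a₃})
    (h2 : ∀ W : Submodule ℚ (Fin 3 → ℚ), Module.finrank ℚ W = 2 →
      ∀ x ∈ psub W, ∀ y ∈ psub W, ∀ z ∈ psub W, f x = f y ∨ f x = f z ∨ f y = f z)
    (hlines : ∀ W : Submodule ℚ (Fin 3 → ℚ), Module.finrank ℚ W = 2 →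
      ∃ B : Set (Fin 3 → ℚ), IsZpLatIn p W B ∧ InducedOn f W p B ∧
        ∃ q : Fin 3 → ℚ, q ∈ B \ pSMul p B ∧
          ∀ x y : Fin 3 → ℚ, ∀ (hx : x ≠ 0) (hy : y ≠ 0), x ∈ W → y ∈ W →
            ¬ ZpRelV p B x q → ¬ ZpRelV p B y q →
            f (Projectivization.mk ℚ x hx) = f (Projectivization.mk ℚ y hy)) :
    ∃ B₁ B₂ B₃ : Set (Fin 3 → ℚ),
      (IsZpLatIn p ⊤ B₁ ∧ InducedOn f ⊤ p B₁ ∧ ResFlagPlane f p B₁) ∧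
      (IsZpLatIn p ⊤ B₂ ∧ InducedOn f ⊤ p B₂ ∧ ResFlagPlane f p B₂) ∧
      (IsZpLatIn p ⊤ B₃ ∧ InducedOn f ⊤ p B₃ ∧ ResFlagPlane f p B₃) ∧
      ¬ LatEq B₁ B₂ ∧ ¬ LatEq B₁ B₃ ∧ ¬ LatEq B₂ B₃ ∧
      ∀ B' : Set (Fin 3 → ℚ),
        IsZpLatIn p ⊤ B' → InducedOn f ⊤ p B' → ResFlagPlane f p B' →
        (LatEq B' B₁ ∨ LatEq B' B₂ ∨ LatEq B' B₃) := by
  obtain ⟨a₁, a₂, a₃, h₁₂, h₁₃, h₂₃, hrange⟩ := h3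
  exact stmt10_general hp (by simp)
    (hrange ▸ Set.encard_eq_three.2 ⟨a₁, a₂, a₃, h₁₂, h₁₃, h₂₃, rfl⟩).ge hlines
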